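/- Let n ≥ 3 and let X ⊆ ℂ^n be an open set, with d the Euclidean distance on ℂ^n. Let Ω be an open set with compact closure contained in X and let ρ : Ω → ℝ be a smooth function such that the set {z ∈ Ω : a ≤ ρ(z) ≤ b} is compact and contained in Ω, and such that at each point of Ω the Levi form of ρ has at least 2 positive eigenvalues. Assume that ρ has at most one critical point in {z ∈ Ω : a ≤ ρ(z) ≤ b}, and that if q is a critical point of ρ there, then a < ρ(q) < b and q is a non-degenerate critical point. Let K be a compact subset of X with K ∩ Ω = ∅. Assume f : 𝔻̄ → X is a continuous map, holomorphic on 𝔻, such that f(b𝔻) ⊆ {z ∈ Ω : ρ(z) > a}, and let r with 0 < r < 1 be such that f(𝔻̄ \ r𝔻) ∩ K = ∅. Then for every ε > 0 there exists a continuous map g : 𝔻̄ → X, holomorphic on 𝔻, with: (i) g(b𝔻) ⊆ {z ∈ Ω : ρ(z) > b}; (ii) d(g(ζ), f(ζ)) < ε for all |ζ| ≤ r; (iii) g(𝔻̄ \ r𝔻) ∩ K = ∅; (iv) g(0) = f(0); (v) g′(0) = λ·f′(0) for some λ with r < λ < 1. -/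

import Mathlib

open Metric

/-!
Small quadratic discs `η ↦ z + η a₁ + η² a₂`, depending continuously on the boundary point, are
attached to the boundary of the disc. By Stone–Weierstrass the coefficients are, after
multiplication by a power of `ζ`, uniformly close to polynomials on the circle; substituting
`η = ζ ^ N` with `N` large gives an entire correction that is negligible away from the circle and
vanishes to second order at the origin. Only the initial dilation `ζ ↦ λ ζ` changes the derivative
there.

At a noncritical point two positive eigenvalues leave room for a direction `a₁` that is complex
tangent to the level set and has positive Levi form. The coefficient `a₂` is chosen to cancel the
`η²`-harmonic of the Hessian, so that `ρ` grows by a definite amount on the whole circle `‖η‖ = 1`.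
By compactness finitely many such pushes lift the boundary through any range of levels free of
critical points. Adding a convex function to `ρ` preserves the hypothesis on the Levi form.

At a nondegenerate critical point `q` take vectors `p₁`, `p₂` that are positive and orthogonal for
the Hessian `H`, and put `l = H(p₁, ·) + i H(p₂, ·)`. The real codimension of `l(z - q) = 0` is two,
so a generic perturbation makes the boundary curve avoid it, and quadratic discs along `e₁`, `e₂`
with `l(η e₁) = η`, `l(η e₂) = η̄` push the boundary off it by an amount that pays for the loss in
`ρ`. Then `ρ` plus a small multiple of a smoothed `|l(z - q)|` exceeds `ρ(q)` on the boundary. It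
has `q` as its only critical point, since `H + K (H(p₁, ·)² + H(p₂, ·)²)` is nondegenerate uniformly
in `K ≥ 0`, so the noncritical pushes apply to it and carry the boundary past the level `ρ(q)`.
-/

open Topology Filter

section CircleApproximation

theorem exists_pow_mul_eq_of_mem_starClosure {g : C(sphere (0 : ℂ) 1, ℂ)}
    (hg : g ∈ (polynomialFunctions (sphere (0 : ℂ) 1)).starClosure) :
    ∃ (M : ℕ) (P Q : ℂ → ℂ), Differentiable ℂ P ∧ Differentiable ℂ Q ∧
      ∀ ζ : sphere (0 : ℂ) 1, (ζ : ℂ) ^ M * g ζ = P ζ ∧ (ζ : ℂ) ^ M * star (g ζ) = Q ζ := by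
  rw [polynomialFunctions.starClosure_eq_adjoin_X] at hg
  induction hg using StarAlgebra.adjoin_induction with
  | mem x hx =>
    obtain rfl := Set.mem_singleton_iff.1 hx
    refine ⟨1, fun z => z ^ 2, fun _ => 1, by fun_prop, by fun_prop, fun ζ => ⟨?_, ?_⟩⟩
    · simp [sq]
    · simp [Complex.mul_conj']
  | algebraMap c =>
    exact ⟨0, fun _ => c, fun _ => star c, by fun_prop, by fun_prop, fun ζ => by simp⟩
  | add x y _ _ hx hy =>
    obtain ⟨M, P, Q, hP, hQ, h⟩ := hx
    obtain ⟨M', P', Q', hP', hQ', h'⟩ := hy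
    refine ⟨M + M', fun z => z ^ M' * P z + z ^ M * P' z,
      fun z => z ^ M' * Q z + z ^ M * Q' z, by fun_prop, by fun_prop, fun ζ => ?_⟩
    simp only [← (h ζ).1, ← (h ζ).2, ← (h' ζ).1, ← (h' ζ).2, ContinuousMap.add_apply, star_add]
    constructor <;> ring
  | mul x y _ _ hx hy =>
    obtain ⟨M, P, Q, hP, hQ, h⟩ := hx
    obtain ⟨M', P', Q', hP', hQ', h'⟩ := hy
    refine ⟨M + M', fun z => P z * P' z, fun z => Q z * Q' z, by fun_prop, by fun_prop,
      fun ζ => ?_⟩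
    simp only [← (h ζ).1, ← (h ζ).2, ← (h' ζ).1, ← (h' ζ).2, ContinuousMap.mul_apply, star_mul]
    constructor <;> ring
  | star x _ hx =>
    obtain ⟨M, P, Q, hP, hQ, h⟩ := hx
    exact ⟨M, Q, P, hQ, hP, fun ζ => ⟨(h ζ).2, by simpa using (h ζ).1⟩⟩

theorem exists_norm_pow_mul_sub_lt (f : C(sphere (0 : ℂ) 1, ℂ)) {ε : ℝ} (hε : 0 < ε) :
    ∃ (M : ℕ) (P : ℂ → ℂ), Differentiable ℂ P ∧
      ∀ ζ : sphere (0 : ℂ) 1, ‖(ζ : ℂ) ^ M * f ζ - P ζ‖ < ε := by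
  have hf : f ∈ (polynomialFunctions (sphere (0 : ℂ) 1)).starClosure.topologicalClosure := by
    rw [polynomialFunctions.starClosure_topologicalClosure]
    trivial
  obtain ⟨g, hg, hfg⟩ := Metric.mem_closure_iff.1 hf ε hε
  obtain ⟨M, P, _, hP, _, h⟩ := exists_pow_mul_eq_of_mem_starClosure hg
  refine ⟨M, P, hP, fun ζ => ?_⟩
  rw [← (h ζ).1, ← mul_sub, norm_mul, norm_pow, norm_eq_of_mem_sphere, one_pow, one_mul,
    ← dist_eq_norm]
  exact (ContinuousMap.dist_apply_le_dist ζ).trans_lt hfg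

variable {E : Type*} [NormedAddCommGroup E] [NormedSpace ℂ E]

theorem norm_pow_smul_of_norm_eq_one {ζ : ℂ} (hζ : ‖ζ‖ = 1) (k : ℕ) (x : E) :
    ‖ζ ^ k • x‖ = ‖x‖ := by
  rw [norm_smul, norm_pow, hζ, one_pow, one_mul]

variable [FiniteDimensional ℂ E]

theorem exists_norm_pow_smul_sub_lt {A : ℂ → E} (hA : ContinuousOn A (sphere 0 1)) {ε : ℝ}
    (hε : 0 < ε) :
    ∃ (M : ℕ) (P : ℂ → E), Differentiable ℂ P ∧
      ∀ ζ ∈ sphere (0 : ℂ) 1, ‖ζ ^ M • A ζ - P ζ‖ < ε := by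
  classical
  let b := Module.finBasis ℂ E
  let C : ℝ := ∑ i, ‖b i‖ + 1
  have hC : 0 < C := by positivity
  have hcoord (i) : ∃ (M : ℕ) (P : ℂ → ℂ), Differentiable ℂ P ∧
      ∀ ζ : sphere (0 : ℂ) 1, ‖(ζ : ℂ) ^ M * b.coord i (A ζ) - P ζ‖ < ε / C :=
    exists_norm_pow_mul_sub_lt
      ⟨fun ζ => b.coord i (A ζ), (LinearMap.continuous_of_finiteDimensional (b.coord i)).comp
        (continuousOn_iff_continuous_domRestrict.1 hA)⟩ (by positivity)
  choose M P hP h using hcoord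
  refine ⟨∑ i, M i, fun z => ∑ i, (z ^ (∑ j ∈ Finset.univ.erase i, M j) * P i z) • b i,
    by fun_prop, fun ζ hζ => ?_⟩
  have hζ1 : ‖ζ‖ = 1 := mem_sphere_zero_iff_norm.1 hζ
  have hsplit : ζ ^ (∑ i, M i) • A ζ - ∑ i, (ζ ^ (∑ j ∈ Finset.univ.erase i, M j) * P i ζ) • b i
      = ∑ i, ζ ^ (∑ j ∈ Finset.univ.erase i, M j) •
          (ζ ^ M i * b.coord i (A ζ) - P i ζ) • b i := by
    conv_lhs => rw [← b.sum_repr (A ζ), Finset.smul_sum, ← Finset.sum_sub_distrib]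
    refine Finset.sum_congr rfl fun i _ => ?_
    rw [← Finset.sum_erase_add _ _ (Finset.mem_univ i), pow_add, Module.Basis.coord_apply]
    module
  calc ‖ζ ^ (∑ i, M i) • A ζ - ∑ i, (ζ ^ (∑ j ∈ Finset.univ.erase i, M j) * P i ζ) • b i‖
      ≤ ∑ i, ε / C * ‖b i‖ := by
        rw [hsplit]
        refine norm_sum_le_of_le _ fun i _ => ?_
        rw [norm_pow_smul_of_norm_eq_one hζ1, norm_smul]
        exact mul_le_mul_of_nonneg_right (h i ⟨ζ, hζ⟩).le (norm_nonneg _)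
    _ = ε / C * (C - 1) := by rw [← Finset.mul_sum, add_sub_cancel_right]
    _ < ε / C * C := by gcongr; linarith
    _ = ε := div_mul_cancel₀ ε hC.ne'

theorem exists_norm_pow_smul_sub_lt₂ {A₁ A₂ : ℂ → E} (hA₁ : ContinuousOn A₁ (sphere 0 1))
    (hA₂ : ContinuousOn A₂ (sphere 0 1)) {ε : ℝ} (hε : 0 < ε) :
    ∃ (M : ℕ) (P₁ P₂ : ℂ → E), Differentiable ℂ P₁ ∧ Differentiable ℂ P₂ ∧
      ∀ ζ ∈ sphere (0 : ℂ) 1, ‖ζ ^ M • A₁ ζ - P₁ ζ‖ < ε ∧ ‖ζ ^ M • A₂ ζ - P₂ ζ‖ < ε := by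
  obtain ⟨M₁, P₁, hP₁, h₁⟩ := exists_norm_pow_smul_sub_lt hA₁ hε
  obtain ⟨M₂, P₂, hP₂, h₂⟩ := exists_norm_pow_smul_sub_lt hA₂ hε
  refine ⟨M₁ + M₂, fun z => z ^ M₂ • P₁ z, fun z => z ^ M₁ • P₂ z, by fun_prop, by fun_prop,
    fun ζ hζ => ?_⟩
  have hζ1 : ‖ζ‖ = 1 := mem_sphere_zero_iff_norm.1 hζ
  constructor
  · rw [add_comm, pow_add, mul_smul, ← smul_sub, norm_pow_smul_of_norm_eq_one hζ1]
    exact h₁ ζ hζ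
  · rw [pow_add, mul_smul, ← smul_sub, norm_pow_smul_of_norm_eq_one hζ1]
    exact h₂ ζ hζ

end CircleApproximation

section Attachment

theorem exists_radius_forall_exists_sphere_dist_lt {V Y : Type*} [NormedAddCommGroup V]
    [NormedSpace ℝ V] [ProperSpace V] [PseudoMetricSpace Y] {F : V → Y}
    (hF : ContinuousOn F (closedBall 0 1)) {r ε : ℝ} (hr : r < 1) (hε : 0 < ε) :
    ∃ s, 0 ≤ s ∧ r ≤ s ∧ s < 1 ∧ ∀ ζ ∈ closedBall (0 : V) 1, s < ‖ζ‖ →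
      ∃ ξ ∈ sphere (0 : V) 1, dist (F ζ) (F ξ) < ε := by
  obtain ⟨δ, hδ, hFδ⟩ := Metric.uniformContinuousOn_iff.1
    ((isCompact_closedBall (0 : V) 1).uniformContinuousOn_of_continuous hF) ε hε
  refine ⟨max (max r (1 - δ)) 0, le_max_right _ _, (le_max_left _ _).trans (le_max_left _ _),
    max_lt (max_lt hr (by linarith)) one_pos, fun ζ hζ hs => ?_⟩
  simp only [max_lt_iff] at hs
  have hζ0 : ζ ≠ 0 := norm_pos_iff.1 hs.2
  have hξ : ‖ζ‖⁻¹ • ζ ∈ sphere (0 : V) 1 := by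
    simp [norm_smul, hζ0]
  refine ⟨_, hξ, hFδ ζ hζ _ (sphere_subset_closedBall hξ) ?_⟩
  have hζ1 : ‖ζ‖ ≤ 1 := mem_closedBall_zero_iff.1 hζ
  calc dist ζ (‖ζ‖⁻¹ • ζ) = ‖(‖ζ‖⁻¹ - 1) • ζ‖ := by
        rw [dist_comm, dist_eq_norm, sub_smul, one_smul]
    _ = 1 - ‖ζ‖ := by
        rw [norm_smul, Real.norm_of_nonneg (sub_nonneg.2 ((one_le_inv₀ hs.2).2 hζ1)), sub_mul,
          inv_mul_cancel₀ hs.2.ne', one_mul]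
    _ < δ := by linarith [hs.1.2]

variable {E : Type*} [NormedAddCommGroup E] [NormedSpace ℂ E]

/-- The quadratic disc `η ↦ z + η a₁ + η² a₂` centred at `z`. Pushing discs are attached to the
boundary of a given disc in this form, with `z`, `a₁`, `a₂` depending on the boundary point. -/
def quadDisc (z a₁ a₂ : E) (η : ℂ) : E := z + η • a₁ + η ^ 2 • a₂

theorem dist_quadDisc_le (z a₁ a₂ : E) {η : ℂ} (hη : ‖η‖ = 1) :
    dist (quadDisc z a₁ a₂ η) z ≤ ‖a₁‖ + ‖a₂‖ := by
  rw [quadDisc, dist_eq_norm, add_assoc, add_sub_cancel_left,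
    ← norm_pow_smul_of_norm_eq_one hη 2 a₂, ← norm_pow_smul_of_norm_eq_one hη 1 a₁, pow_one]
  exact norm_add_le _ _

/-- The entire correction which, on the unit circle and for `P₁`, `P₂` close to `ζ ^ M • A₁ ζ`,
`ζ ^ M • A₂ ζ`, is close to `η • A₁ ζ + η ^ 2 • A₂ ζ` with `η = ζ ^ (N + 2 + M)`. The factor
`ζ ^ 2` keeps the value and the derivative at the origin, a large `N` makes it small inside. -/
def circleCorrection (N M : ℕ) (P₁ P₂ : ℂ → E) (ζ : ℂ) : E :=
  ζ ^ 2 • (ζ ^ N • P₁ ζ + ζ ^ (2 * N + 2 + M) • P₂ ζ)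

variable {N M : ℕ} {P₁ P₂ : ℂ → E}

theorem differentiable_circleCorrection (hP₁ : Differentiable ℂ P₁) (hP₂ : Differentiable ℂ P₂) :
    Differentiable ℂ (circleCorrection N M P₁ P₂) := by
  unfold circleCorrection
  fun_prop

theorem circleCorrection_zero : circleCorrection N M P₁ P₂ 0 = 0 := by
  simp [circleCorrection]

theorem deriv_circleCorrection_zero (hP₁ : Differentiable ℂ P₁) (hP₂ : Differentiable ℂ P₂) :
    deriv (circleCorrection N M P₁ P₂) 0 = 0 := by
  have hQ : Differentiable ℂ fun ζ => ζ ^ N • P₁ ζ + ζ ^ (2 * N + 2 + M) • P₂ ζ := by fun_prop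
  exact ((hasDerivAt_pow 2 (0 : ℂ)).smul (hQ 0).hasDerivAt).deriv.trans (by simp)

theorem norm_circleCorrection_le {ζ : ℂ} (hζ : ‖ζ‖ ≤ 1) :
    ‖circleCorrection N M P₁ P₂ ζ‖ ≤ ‖ζ‖ ^ N * (‖P₁ ζ‖ + ‖P₂ ζ‖) := by
  have hpow (k : ℕ) (x : E) : ‖ζ ^ k • x‖ ≤ ‖x‖ := by
    rw [norm_smul, norm_pow]
    exact mul_le_of_le_one_left (norm_nonneg _) (pow_le_one₀ (norm_nonneg _) hζ)
  have hfactor : circleCorrection N M P₁ P₂ ζ =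
      ζ ^ N • (ζ ^ 2 • P₁ ζ + ζ ^ (N + 4 + M) • P₂ ζ) := by
    rw [circleCorrection]
    module
  rw [hfactor, norm_smul, norm_pow]
  gcongr
  exact (norm_add_le _ _).trans (add_le_add (hpow _ _) (hpow _ _))

theorem dist_add_circleCorrection_quadDisc_le (z a₁ a₂ : E) {ζ : ℂ} (hζ : ‖ζ‖ = 1) :
    dist (z + circleCorrection N M P₁ P₂ ζ) (quadDisc z a₁ a₂ (ζ ^ (N + 2 + M))) ≤
      ‖ζ ^ M • a₁ - P₁ ζ‖ + ‖ζ ^ M • a₂ - P₂ ζ‖ := by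
  have hdiff : quadDisc z a₁ a₂ (ζ ^ (N + 2 + M)) - (z + circleCorrection N M P₁ P₂ ζ) =
      ζ ^ (N + 2) • (ζ ^ M • a₁ - P₁ ζ) + ζ ^ (2 * N + 4 + M) • (ζ ^ M • a₂ - P₂ ζ) := by
    rw [quadDisc, circleCorrection]
    module
  rw [dist_comm, dist_eq_norm, hdiff, ← norm_pow_smul_of_norm_eq_one hζ (N + 2) (_ - P₁ ζ),
    ← norm_pow_smul_of_norm_eq_one hζ (2 * N + 4 + M) (_ - P₂ ζ)]
  exact norm_add_le _ _

theorem norm_le_of_dist_lt_of_norm_pow_smul_sub_lt {P : ℂ → E} {a : E} {ζ ξ : ℂ} {δ : ℝ}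
    (hξ : ‖ξ‖ = 1) (hP : dist (P ζ) (P ξ) < δ) (ha : ‖ξ ^ M • a - P ξ‖ < δ) :
    ‖P ζ‖ ≤ ‖a‖ + 2 * δ := by
  rw [dist_eq_norm] at hP
  calc ‖P ζ‖ ≤ ‖ξ ^ M • a‖ + ‖ξ ^ M • a - P ζ‖ := norm_le_norm_add_norm_sub _ _
    _ ≤ ‖a‖ + (‖ξ ^ M • a - P ξ‖ + ‖P ξ - P ζ‖) := by
        rw [norm_pow_smul_of_norm_eq_one hξ]
        gcongr
        exact norm_sub_le_norm_sub_add_norm_sub _ _ _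
    _ ≤ ‖a‖ + 2 * δ := by rw [norm_sub_rev (P ξ)]; linarith

theorem exists_forall_mem_closedBall_norm_circleCorrection_lt (hP₁ : Continuous P₁)
    (hP₂ : Continuous P₂) (M : ℕ) {s ε : ℝ} (hs0 : 0 ≤ s) (hs1 : s < 1) (hε : 0 < ε) :
    ∃ N : ℕ, ∀ ζ ∈ closedBall (0 : ℂ) s, ‖circleCorrection N M P₁ P₂ ζ‖ < ε := by
  obtain ⟨B, hB⟩ := (isCompact_closedBall (0 : ℂ) s).exists_bound_of_continuousOn
    (hP₁.norm.add hP₂.norm).continuousOn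
  have hB0 : 0 ≤ B := (norm_nonneg _).trans (hB 0 (mem_closedBall_self hs0))
  obtain ⟨N, hN⟩ := exists_pow_lt_of_lt_one (show 0 < ε / (B + 1) by positivity) hs1
  refine ⟨N, fun ζ hζ => ?_⟩
  have hζs : ‖ζ‖ ≤ s := mem_closedBall_zero_iff.1 hζ
  calc ‖circleCorrection N M P₁ P₂ ζ‖ ≤ ‖ζ‖ ^ N * (‖P₁ ζ‖ + ‖P₂ ζ‖) :=
        norm_circleCorrection_le (hζs.trans hs1.le)
    _ ≤ s ^ N * B := by
        gcongr
        exact (le_abs_self _).trans (hB ζ hζ)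
    _ ≤ s ^ N * (B + 1) := by gcongr; linarith
    _ < ε := by rwa [← lt_div_iff₀ (by positivity)]

theorem exists_dist_quadDisc_lt [FiniteDimensional ℂ E] {g A₁ A₂ : ℂ → E}
    (hg : ContinuousOn g (closedBall 0 1)) (hA₁ : ContinuousOn A₁ (sphere 0 1))
    (hA₂ : ContinuousOn A₂ (sphere 0 1)) {ε r : ℝ} (hε : 0 < ε) (hr : r < 1) :
    ∃ Q : ℂ → E, Differentiable ℂ Q ∧ Q 0 = 0 ∧ deriv Q 0 = 0 ∧
      (∀ ζ ∈ sphere (0 : ℂ) 1, ∃ η : ℂ, ‖η‖ = 1 ∧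
        dist (g ζ + Q ζ) (quadDisc (g ζ) (A₁ ζ) (A₂ ζ) η) < ε) ∧
      ∀ ζ ∈ closedBall (0 : ℂ) 1, ‖Q ζ‖ < ε ∨
        (r < ‖ζ‖ ∧ ∃ ξ ∈ sphere (0 : ℂ) 1, dist (g ζ) (g ξ) < ε ∧
          ‖Q ζ‖ ≤ ‖A₁ ξ‖ + ‖A₂ ξ‖ + ε) := by
  obtain ⟨M, P₁, P₂, hP₁, hP₂, hP⟩ := exists_norm_pow_smul_sub_lt₂ hA₁ hA₂
    (show 0 < ε / 4 by positivity)
  obtain ⟨s, hs0, hrs, hs1, hnear⟩ := exists_radius_forall_exists_sphere_dist_lt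
    (hg.prodMk (hP₁.continuous.prodMk hP₂.continuous).continuousOn) hr
    (show 0 < ε / 4 by positivity)
  obtain ⟨N, hN⟩ := exists_forall_mem_closedBall_norm_circleCorrection_lt hP₁.continuous
    hP₂.continuous M hs0 hs1 hε
  refine ⟨circleCorrection N M P₁ P₂, differentiable_circleCorrection hP₁ hP₂,
    circleCorrection_zero, deriv_circleCorrection_zero hP₁ hP₂, fun ζ hζ => ?_, fun ζ hζ => ?_⟩
  · have hζ1 : ‖ζ‖ = 1 := mem_sphere_zero_iff_norm.1 hζ
    refine ⟨ζ ^ (N + 2 + M), by rw [norm_pow, hζ1, one_pow],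
      (dist_add_circleCorrection_quadDisc_le _ _ _ hζ1).trans_lt ?_⟩
    linarith [hP ζ hζ]
  · refine (le_or_gt ‖ζ‖ s).imp (fun h => hN ζ (mem_closedBall_zero_iff.2 h))
      fun h => ⟨hrs.trans_lt h, ?_⟩
    obtain ⟨ξ, hξ, hdist⟩ := hnear ζ hζ h
    simp only [Prod.dist_eq, max_lt_iff] at hdist
    have hξ1 : ‖ξ‖ = 1 := mem_sphere_zero_iff_norm.1 hξ
    have hζ1 : ‖ζ‖ ≤ 1 := mem_closedBall_zero_iff.1 hζ
    refine ⟨ξ, hξ, by linarith, ?_⟩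
    calc ‖circleCorrection N M P₁ P₂ ζ‖ ≤ ‖ζ‖ ^ N * (‖P₁ ζ‖ + ‖P₂ ζ‖) :=
          norm_circleCorrection_le hζ1
      _ ≤ ‖P₁ ζ‖ + ‖P₂ ζ‖ :=
          mul_le_of_le_one_left (by positivity) (pow_le_one₀ (norm_nonneg _) hζ1)
      _ ≤ (‖A₁ ξ‖ + 2 * (ε / 4)) + (‖A₂ ξ‖ + 2 * (ε / 4)) := by
          gcongr
          · exact norm_le_of_dist_lt_of_norm_pow_smul_sub_lt hξ1 hdist.2.1 (hP ξ hξ).1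
          · exact norm_le_of_dist_lt_of_norm_pow_smul_sub_lt hξ1 hdist.2.2 (hP ξ hξ).2
      _ = ‖A₁ ξ‖ + ‖A₂ ξ‖ + ε := by ring

end Attachment

section DiscProblem

theorem exists_forall_dist_lt_mem_of_isCompact {α Y : Type*} [TopologicalSpace α]
    [PseudoMetricSpace Y] {T : Set α} (hT : IsCompact T) {g : α → Y} (hg : ContinuousOn g T)
    {U : Set Y} (hU : IsOpen U) (h : ∀ ζ ∈ T, g ζ ∈ U) :
    ∃ δ > 0, ∀ ζ ∈ T, ∀ x, dist x (g ζ) < δ → x ∈ U := by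
  obtain ⟨δ, hδ, hsub⟩ := (hT.image_of_continuousOn hg).exists_thickening_subset_open hU
    (Set.image_subset_iff.2 h)
  exact ⟨δ, hδ, fun ζ hζ x hx => hsub (mem_thickening_iff.2 ⟨g ζ, ⟨ζ, hζ, rfl⟩, hx⟩)⟩

theorem exists_forall_dist_lt_add_mem_of_isCompact {α Y : Type*} [TopologicalSpace α]
    [PseudoMetricSpace Y] [ProperSpace Y] {T : Set α} (hT : IsCompact T) {g : α → Y}
    (hg : ContinuousOn g T) {φ : α → ℝ} (hφ : ContinuousOn φ T) {U : Set Y} (hU : IsOpen U)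
    (h : ∀ ζ ∈ T, closedBall (g ζ) (φ ζ) ⊆ U) :
    ∃ m > 0, ∀ ζ ∈ T, ∀ x, dist x (g ζ) < φ ζ + m → x ∈ U := by
  rcases Uᶜ.eq_empty_or_nonempty with he | hne
  · exact ⟨1, one_pos, fun ζ _ x _ => by simp [Set.compl_empty_iff.1 he]⟩
  have hpos : ∀ ζ ∈ T, 0 < infDist (g ζ) Uᶜ - φ ζ := fun ζ hζ => by
    obtain ⟨y, hy, hd⟩ := hU.isClosed_compl.exists_infDist_eq_dist hne (g ζ)
    by_contra! hle
    exact hy (h ζ hζ (mem_closedBall'.2 (by linarith)))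
  obtain ⟨m, hm, hle⟩ := hT.exists_forall_le'
    (f := fun ζ => infDist (g ζ) Uᶜ - φ ζ)
    (((continuous_infDist_pt Uᶜ).comp_continuousOn hg).sub hφ) hpos
  refine ⟨m, hm, fun ζ hζ x hx => ?_⟩
  by_contra hxU
  have hinf : infDist (g ζ) Uᶜ ≤ dist x (g ζ) := dist_comm x (g ζ) ▸ infDist_le_dist_of_mem hxU
  linarith [hle ζ hζ]

/-- The constraints under which the boundary of an analytic disc is pushed: discs stay in `X`, have
their boundary in `Ω`, approximate `f` up to `ε` on the disc of radius `r`, and avoid `K` outside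
that disc. -/
structure DiscProblem (E : Type*) [NormedAddCommGroup E] where
  X : Set E
  Ω : Set E
  K : Set E
  f : ℂ → E
  r : ℝ
  ε : ℝ
  isOpen_X : IsOpen X
  isOpen_Ω : IsOpen Ω
  subset_X : Ω ⊆ X
  isClosed_K : IsClosed K
  disjoint : Disjoint K Ω
  r_lt_one : r < 1
  continuousOn_f : ContinuousOn f (closedBall 0 r)

namespace DiscProblem

variable {E : Type*} [NormedAddCommGroup E] [NormedSpace ℂ E]

/-- A disc, holomorphic on a neighbourhood of the closed unit disc, which satisfies all constraints
and has the prescribed derivative `D` at its centre. -/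
structure Admissible (P : DiscProblem E) (D : E) (g : ℂ → E) : Prop where
  analyticOnNhd : AnalyticOnNhd ℂ g (closedBall 0 1)
  mem_X : ∀ ζ ∈ closedBall (0 : ℂ) 1, g ζ ∈ P.X
  mem_Ω : ∀ ζ ∈ sphere (0 : ℂ) 1, g ζ ∈ P.Ω
  dist_lt : ∀ ζ ∈ closedBall (0 : ℂ) P.r, dist (g ζ) (P.f ζ) < P.ε
  notMem_K : ∀ ζ ∈ closedBall (0 : ℂ) 1, P.r ≤ ‖ζ‖ → g ζ ∉ P.K
  apply_zero : g 0 = P.f 0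
  deriv_zero : deriv g 0 = D

variable {P : DiscProblem E} {D : E} {g : ℂ → E}

theorem Admissible.continuousOn (hg : P.Admissible D g) : ContinuousOn g (closedBall 0 1) :=
  hg.analyticOnNhd.continuousOn

theorem Admissible.continuousOn_sphere (hg : P.Admissible D g) : ContinuousOn g (sphere 0 1) :=
  hg.continuousOn.mono sphere_subset_closedBall

variable [FiniteDimensional ℂ E]

theorem Admissible.exists_forall_add (hg : P.Admissible D g) :
    ∃ δ > 0, ∀ Q : ℂ → E, Differentiable ℂ Q → Q 0 = 0 → deriv Q 0 = 0 →
      (∀ ζ ∈ closedBall (0 : ℂ) 1, ‖Q ζ‖ < δ ∨ (P.r < ‖ζ‖ ∧ g ζ + Q ζ ∈ P.Ω)) →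
      (∀ ζ ∈ sphere (0 : ℂ) 1, g ζ + Q ζ ∈ P.Ω) → P.Admissible D fun ζ => g ζ + Q ζ := by
  have hE : CompleteSpace E := FiniteDimensional.complete ℂ E
  have hball : closedBall (0 : ℂ) P.r ⊆ closedBall 0 1 :=
    closedBall_subset_closedBall P.r_lt_one.le
  have hdisc := isCompact_closedBall (0 : ℂ) 1
  obtain ⟨δ₁, hδ₁, hX⟩ := exists_forall_dist_lt_mem_of_isCompact hdisc hg.continuousOn
    P.isOpen_X hg.mem_X
  obtain ⟨δ₂, hδ₂, hK⟩ := exists_forall_dist_lt_mem_of_isCompact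
    (hdisc.inter_right (isClosed_le continuous_const continuous_norm : IsClosed {ζ | P.r ≤ ‖ζ‖}))
    (hg.continuousOn.mono Set.inter_subset_left) P.isClosed_K.isOpen_compl
    fun ζ hζ => hg.notMem_K ζ hζ.1 hζ.2
  obtain ⟨δ₃, hδ₃, hf⟩ := (isCompact_closedBall (0 : ℂ) P.r).exists_forall_le'
    (f := fun ζ => P.ε - dist (g ζ) (P.f ζ))
    (continuousOn_const.sub
      (continuous_dist.comp_continuousOn ((hg.continuousOn.mono hball).prodMk P.continuousOn_f)))
    fun ζ hζ => sub_pos.2 (hg.dist_lt ζ hζ)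
  refine ⟨min δ₁ (min δ₂ δ₃), by positivity, fun Q hQ hQ0 hQ0' hclose hΩ => ⟨?_, ?_, hΩ, ?_, ?_,
    by rw [hQ0, add_zero, hg.apply_zero], ?_⟩⟩
  · exact fun ζ hζ => (hg.analyticOnNhd ζ hζ).add (hQ.analyticAt ζ)
  · intro ζ hζ
    rcases hclose ζ hζ with h | h
    · exact hX ζ hζ _ (by simpa using h.trans_le (min_le_left _ _))
    · exact P.subset_X h.2
  · intro ζ hζ
    rcases hclose ζ (hball hζ) with h | h
    · have hδ : ‖Q ζ‖ < δ₃ := h.trans_le ((min_le_right _ _).trans (min_le_right _ _))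
      have htri := dist_triangle (g ζ + Q ζ) (g ζ) (P.f ζ)
      rw [dist_self_add_left] at htri
      linarith [hf ζ hζ]
    · exact absurd h.1 (mem_closedBall_zero_iff.1 hζ).not_gt
  · intro ζ hζ hrζ
    rcases hclose ζ hζ with h | h
    · refine hK ζ ⟨hζ, hrζ⟩ _ ?_
      simpa using h.trans_le ((min_le_right _ _).trans (min_le_left _ _))
    · exact fun hmem => P.disjoint.le_bot ⟨hmem, h.2⟩
  · have hg0 := (hg.analyticOnNhd 0 (mem_closedBall_self zero_le_one)).differentiableAt
    rw [deriv_fun_add hg0 (hQ 0), hQ0', add_zero, hg.deriv_zero]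

theorem Admissible.exists_attach (hg : P.Admissible D g) {A₁ A₂ : ℂ → E}
    (hA₁ : ContinuousOn A₁ (sphere 0 1)) (hA₂ : ContinuousOn A₂ (sphere 0 1))
    (hΩ : ∀ ζ ∈ sphere (0 : ℂ) 1, closedBall (g ζ) (‖A₁ ζ‖ + ‖A₂ ζ‖) ⊆ P.Ω)
    {ε : ℝ} (hε : 0 < ε) :
    ∃ g', P.Admissible D g' ∧ ∀ ζ ∈ sphere (0 : ℂ) 1, ∃ η : ℂ, ‖η‖ = 1 ∧
      dist (g' ζ) (quadDisc (g ζ) (A₁ ζ) (A₂ ζ) η) < ε := by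
  have hE : ProperSpace E := FiniteDimensional.proper ℂ E
  obtain ⟨δ, hδ, hadd⟩ := hg.exists_forall_add
  obtain ⟨m, hm, hmΩ⟩ := exists_forall_dist_lt_add_mem_of_isCompact (isCompact_sphere (0 : ℂ) 1)
    hg.continuousOn_sphere (φ := fun ζ => ‖A₁ ζ‖ + ‖A₂ ζ‖) (hA₁.norm.add hA₂.norm) P.isOpen_Ω hΩ
  obtain ⟨Q, hQ, hQ0, hQ0', hbd, hin⟩ := exists_dist_quadDisc_lt hg.continuousOn hA₁ hA₂
    (show 0 < min ε (min δ (m / 4)) by positivity) P.r_lt_one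
  simp only [lt_min_iff] at hbd hin
  have hδm : min ε (min δ (m / 4)) ≤ m / 4 := (min_le_right _ _).trans (min_le_right _ _)
  refine ⟨_, hadd Q hQ hQ0 hQ0' (fun ζ hζ => ?_) fun ζ hζ => ?_, fun ζ hζ => ?_⟩
  · refine (hin ζ hζ).imp (fun h => h.2.1) fun ⟨hr, ξ, hξ, hgξ, hQξ⟩ => ⟨hr, hmΩ ξ hξ _ ?_⟩
    have htri := dist_triangle (g ζ + Q ζ) (g ζ) (g ξ)
    rw [dist_self_add_left] at htri
    linarith
  · obtain ⟨η, hη, h⟩ := hbd ζ hζ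
    refine hmΩ ζ hζ _ ?_
    have htri := dist_triangle (g ζ + Q ζ) (quadDisc (g ζ) (A₁ ζ) (A₂ ζ) η) (g ζ)
    linarith [dist_quadDisc_le (g ζ) (A₁ ζ) (A₂ ζ) hη]
  · obtain ⟨η, hη, h⟩ := hbd ζ hζ
    exact ⟨η, hη, h.1⟩

end DiscProblem

theorem exists_lt_one_forall_dist_smul_lt {V Y : Type*} [NormedAddCommGroup V] [NormedSpace ℝ V]
    [ProperSpace V] [PseudoMetricSpace Y] {F : V → Y} (hF : ContinuousOn F (closedBall 0 1))
    {c η : ℝ} (hc : c < 1) (hη : 0 < η) :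
    ∃ t, 0 < t ∧ c < t ∧ t < 1 ∧ ∀ ζ ∈ closedBall (0 : V) 1, dist (F (t • ζ)) (F ζ) < η := by
  obtain ⟨δ, hδ, hunif⟩ := Metric.uniformContinuousOn_iff.1
    ((isCompact_closedBall (0 : V) 1).uniformContinuousOn_of_continuous hF) η hη
  obtain ⟨t, ht, ht1⟩ := exists_between (max_lt (max_lt one_pos hc) (sub_lt_self 1 hδ))
  simp only [max_lt_iff] at ht
  refine ⟨t, ht.1.1, ht.1.2, ht1, fun ζ hζ => ?_⟩
  have hζ1 : ‖ζ‖ ≤ 1 := mem_closedBall_zero_iff.1 hζ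
  refine hunif _ (mem_closedBall_zero_iff.2 ?_) _ hζ ?_
  · rw [norm_smul, Real.norm_of_nonneg ht.1.1.le]
    exact mul_le_one₀ ht1.le (norm_nonneg _) hζ1
  · calc dist (t • ζ) ζ = ‖(1 - t) • ζ‖ := by
          rw [dist_comm, dist_eq_norm, sub_smul, one_smul]
      _ = (1 - t) * ‖ζ‖ := by rw [norm_smul, Real.norm_of_nonneg (by linarith)]
      _ ≤ 1 - t := mul_le_of_le_one_right (by linarith) hζ1
      _ < δ := by linarith

theorem DiscProblem.exists_admissible_dilation {E : Type*} [NormedAddCommGroup E] [NormedSpace ℂ E]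
    [CompleteSpace E] (P : DiscProblem E) (hε : 0 < P.ε)
    (hf : ContinuousOn P.f (closedBall 0 1)) (hf' : DifferentiableOn ℂ P.f (ball 0 1))
    (hfX : ∀ ζ ∈ closedBall (0 : ℂ) 1, P.f ζ ∈ P.X)
    (hfK : ∀ ζ ∈ closedBall (0 : ℂ) 1, P.r ≤ ‖ζ‖ → P.f ζ ∉ P.K) {U : Set E} (hU : IsOpen U)
    (hUΩ : U ⊆ P.Ω) (hfU : ∀ ζ ∈ sphere (0 : ℂ) 1, P.f ζ ∈ U) :
    ∃ t : ℝ, P.r < t ∧ t < 1 ∧ P.Admissible ((t : ℂ) • deriv P.f 0) (fun ζ => P.f (t * ζ)) ∧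
      ∀ ζ ∈ sphere (0 : ℂ) 1, P.f (t * ζ) ∈ U := by
  have hdisc := isCompact_closedBall (0 : ℂ) 1
  obtain ⟨δ₁, hδ₁, hX⟩ := exists_forall_dist_lt_mem_of_isCompact hdisc hf P.isOpen_X hfX
  obtain ⟨δ₂, hδ₂, hS⟩ := exists_forall_dist_lt_mem_of_isCompact (isCompact_sphere (0 : ℂ) 1)
    (hf.mono sphere_subset_closedBall) hU hfU
  obtain ⟨δ₃, hδ₃, hK⟩ := exists_forall_dist_lt_mem_of_isCompact
    (hdisc.inter_right (isClosed_le continuous_const continuous_norm : IsClosed {ζ | P.r ≤ ‖ζ‖}))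
    (hf.mono Set.inter_subset_left) P.isClosed_K.isOpen_compl fun ζ hζ => hfK ζ hζ.1 hζ.2
  obtain ⟨t, ht0, htr, ht1, ht⟩ := exists_lt_one_forall_dist_smul_lt hf P.r_lt_one
    (show 0 < min (min P.ε δ₁) (min δ₂ δ₃) by positivity)
  simp only [Complex.real_smul, lt_min_iff] at ht
  have hmem : ∀ ζ ∈ sphere (0 : ℂ) 1, P.f (t * ζ) ∈ U := fun ζ hζ =>
    hS ζ hζ _ (ht ζ (sphere_subset_closedBall hζ)).2.1
  refine ⟨t, htr, ht1, ⟨fun ζ hζ => ?_, fun ζ hζ => hX ζ hζ _ (ht ζ hζ).1.2,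
    fun ζ hζ => hUΩ (hmem ζ hζ),
    fun ζ hζ => (ht ζ (closedBall_subset_closedBall P.r_lt_one.le hζ)).1.1,
    fun ζ hζ hr => hK ζ ⟨hζ, hr⟩ _ (ht ζ hζ).2.2, by simp, ?_⟩, hmem⟩
  · have htζ : (t : ℂ) * ζ ∈ ball (0 : ℂ) 1 := by
      rw [mem_ball_zero_iff, norm_mul, Complex.norm_of_nonneg ht0.le]
      exact mul_lt_one_of_nonneg_of_lt_one_left ht0.le ht1 (mem_closedBall_zero_iff.1 hζ)
    exact (hf'.analyticAt (isOpen_ball.mem_nhds htζ)).comp_of_eq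
      (analyticAt_const.mul analyticAt_id) rfl
  · simpa using deriv_comp_mul_left (t : ℂ) P.f 0

end DiscProblem

section IsotropicVector

open Module

theorem exists_ne_zero_bilinForm_self_eq_zero {𝕜 V : Type*} [Field 𝕜] [IsAlgClosed 𝕜]
    [NeZero (2 : 𝕜)] [AddCommGroup V] [Module 𝕜 V] (S : LinearMap.BilinForm 𝕜 V)
    (hV : 1 < finrank 𝕜 V) : ∃ w ≠ 0, S w w = 0 := by
  have : Nontrivial V := nontrivial_of_finrank_pos (zero_lt_one.trans hV)
  obtain ⟨x, hx⟩ := exists_ne (0 : V)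
  obtain ⟨y, hxy⟩ := exists_linearIndependent_pair_of_one_lt_finrank hV hx
  by_cases hSx : S x x = 0
  · exact ⟨x, hx, hSx⟩
  obtain ⟨t, ht⟩ := exists_quadratic_eq_zero hSx
    (IsAlgClosed.exists_eq_mul_self (discrim (S x x) (S x y + S y x) (S y y)))
  refine ⟨t • x + y, fun h => one_ne_zero (LinearIndependent.pair_iff.1 hxy t 1 ?_).2, ?_⟩
  · rwa [one_smul]
  · simp only [map_add, map_smul, LinearMap.add_apply, LinearMap.smul_apply, smul_eq_mul]
    linear_combination ht

end IsotropicVector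

section LeviForm

variable {E : Type*} [NormedAddCommGroup E] [NormedSpace ℂ E]

theorem I_smul_I_smul (v : E) : Complex.I • Complex.I • v = -v := by
  rw [smul_smul, Complex.I_mul_I, neg_one_smul]

variable [NormedSpace ℝ E]

theorem complex_smul_eq [IsScalarTower ℝ ℂ E] (η : ℂ) (v : E) :
    η • v = η.re • v + η.im • Complex.I • v := by
  conv_lhs => rw [← Complex.re_add_im η]
  rw [add_smul, mul_smul, ← Complex.coe_algebraMap, algebraMap_smul, algebraMap_smul]

/-- The Levi form of a real bilinear form, up to the positive factor used for the Hessian of a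
function: for `B = d²ρ` it is four times `∑ ∂²ρ/∂zⱼ∂z̄ₖ wⱼ w̄ₖ`. -/
noncomputable def leviForm (B : E →L[ℝ] E →L[ℝ] ℝ) (w : E) : ℝ :=
  B w w + B (Complex.I • w) (Complex.I • w)

/-- The Levi form of `B` is positive definite on some complex plane, that is, it has at least two
positive eigenvalues. -/
def HasPosLeviPlane (B : E →L[ℝ] E →L[ℝ] ℝ) : Prop :=
  ∃ V : Submodule ℂ E, Module.finrank ℂ V = 2 ∧ ∀ w ∈ V, w ≠ 0 → 0 < leviForm B w

variable [IsScalarTower ℝ ℂ E]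

/-- The complex bilinear part of a real bilinear form: the component of `B` of type `(2, 0)`, up to
a factor. -/
noncomputable def holForm (B : E →L[ℝ] E →L[ℝ] ℝ) : LinearMap.BilinForm ℂ E :=
  LinearMap.mk₂ ℂ
    (fun u v => ⟨B u v - B (Complex.I • u) (Complex.I • v),
      -(B u (Complex.I • v) + B (Complex.I • u) v)⟩)
    (fun u u' v => by
      apply Complex.ext <;> simp only [smul_add, map_add, add_apply, Complex.add_re,
        Complex.add_im] <;> ring)
    (fun η u v => by
      rw [complex_smul_eq η u]
      apply Complex.ext <;> simp only [smul_add, smul_comm Complex.I (_ : ℝ), I_smul_I_smul,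
        map_add, map_smul, map_neg, add_apply, smul_apply, neg_apply, smul_eq_mul, smul_neg,
        Complex.mul_re, Complex.mul_im] <;> ring)
    (fun u v v' => by
      apply Complex.ext <;> simp only [smul_add, map_add, Complex.add_re, Complex.add_im] <;> ring)
    (fun η u v => by
      rw [complex_smul_eq η v]
      apply Complex.ext <;> simp only [smul_add, smul_comm Complex.I (_ : ℝ), I_smul_I_smul,
        map_add, map_smul, map_neg, smul_eq_mul, smul_neg, Complex.mul_re, Complex.mul_im] <;> ring)

theorem apply_smul_self_eq_leviForm_add_holForm (B : E →L[ℝ] E →L[ℝ] ℝ) (η : ℂ) (w : E) :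
    B (η • w) (η • w) = (‖η‖ ^ 2 * leviForm B w + (η ^ 2 * holForm B w w).re) / 2 := by
  rw [Complex.sq_norm, Complex.normSq_apply, complex_smul_eq η w]
  simp only [holForm, leviForm, LinearMap.mk₂_apply, map_add, map_smul, add_apply, smul_apply,
    smul_eq_mul, sq, Complex.mul_re, Complex.mul_im]
  ring

theorem holForm_self_eq_zero_iff {B : E →L[ℝ] E →L[ℝ] ℝ} (hB : ∀ u v, B u v = B v u) {w : E} :
    holForm B w w = 0 ↔
      B (Complex.I • w) (Complex.I • w) = B w w ∧ B w (Complex.I • w) = 0 := by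
  simp only [holForm, LinearMap.mk₂_apply, Complex.ext_iff, Complex.zero_re, Complex.zero_im,
    hB (Complex.I • w) w]
  constructor <;> rintro ⟨h₁, h₂⟩ <;> constructor <;> linarith

theorem exists_isotropic_of_finrank_eq_two {B : E →L[ℝ] E →L[ℝ] ℝ} (hB : ∀ u v, B u v = B v u)
    {V : Submodule ℂ E} (hV : Module.finrank ℂ V = 2) :
    ∃ w ∈ V, w ≠ 0 ∧ B (Complex.I • w) (Complex.I • w) = B w w ∧ B w (Complex.I • w) = 0 := by
  obtain ⟨w, hw, hSw⟩ :=
    exists_ne_zero_bilinForm_self_eq_zero ((holForm B).compl₁₂ V.subtype V.subtype)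
      (by rw [hV]; exact one_lt_two)
  exact ⟨w, w.2, by simpa using hw, (holForm_self_eq_zero_iff hB).1 (by simpa using hSw)⟩

end LeviForm

section CrossingFunctional

variable {E : Type*} [NormedAddCommGroup E] [NormedSpace ℝ E]

/-- The complex-valued functional `φ + iψ`. -/
noncomputable def complexPair (φ ψ : E →L[ℝ] ℝ) : E →L[ℝ] ℂ :=
  (Complex.equivRealProdCLM.symm : ℝ × ℝ →L[ℝ] ℂ).comp (φ.prod ψ)

@[simp] theorem complexPair_apply (φ ψ : E →L[ℝ] ℝ) (v : E) :
    complexPair φ ψ v = ⟨φ v, ψ v⟩ := rfl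

theorem innerSL_comp_complexPair (φ ψ : E →L[ℝ] ℝ) (z : E) :
    (innerSL ℝ (complexPair φ ψ z)).comp (complexPair φ ψ) = φ z • φ + ψ z • ψ := by
  ext v
  simp [Complex.inner, mul_comm]

theorem norm_mul_smul_le_of_apply_eq {φ : E →L[ℝ] ℝ} {p y : E} {K t : ℝ} (hK : 0 ≤ K)
    (hp : 0 < φ p) (hy : φ y = t * (1 + K * φ p)) :
    ‖(K * t) • p‖ ≤ (φ p)⁻¹ * ‖φ‖ * ‖p‖ * ‖y‖ := by
  have hmul : φ p * |K * t| ≤ ‖φ‖ * ‖y‖ := by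
    refine le_trans ?_ (φ.le_opNorm y)
    rw [hy, Real.norm_eq_abs, abs_mul, abs_mul, abs_of_nonneg hK,
      abs_of_nonneg (by positivity : 0 ≤ 1 + K * φ p)]
    nlinarith [abs_nonneg t]
  rw [norm_smul, Real.norm_eq_abs]
  calc |K * t| * ‖p‖ ≤ ((φ p)⁻¹ * (‖φ‖ * ‖y‖)) * ‖p‖ := by
        gcongr; rwa [le_inv_mul_iff₀ hp]
    _ = _ := by ring

/-- `y = z + K ∑ (B pᵢ z) pᵢ` satisfies `B y = B z + K ∑ (B pᵢ z) B pᵢ`, and `z` is recovered from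
`y` with coefficients `K / (1 + K B pᵢ pᵢ)`, which are bounded in `K`. -/
theorem exists_mul_norm_le_norm_add_smul_squares [FiniteDimensional ℝ E] {B : E →L[ℝ] E →L[ℝ] ℝ}
    (hB : ∀ u v, B u v = B v u) (hnd : ∀ w, w ≠ 0 → ∃ w', B w w' ≠ 0) {p₁ p₂ : E}
    (h₁ : 0 < B p₁ p₁) (h₂ : 0 < B p₂ p₂) (h₁₂ : B p₁ p₂ = 0) :
    ∃ c > 0, ∀ K : ℝ, 0 ≤ K → ∀ z, c * ‖z‖ ≤ ‖B z + K • (B p₁ z • B p₁ + B p₂ z • B p₂)‖ := by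
  have hker : (B : E →ₗ[ℝ] E →L[ℝ] ℝ).ker = ⊥ := by
    refine LinearMap.ker_eq_bot'.2 fun w hw => by_contra fun hw0 => ?_
    obtain ⟨w', hw'⟩ := hnd w hw0
    exact hw' (DFunLike.congr_fun hw w')
  obtain ⟨C₁, -, hC₁⟩ := LinearMap.exists_antilipschitzWith (B : E →ₗ[ℝ] E →L[ℝ] ℝ) hker
  have hC₁ (y : E) : ‖y‖ ≤ C₁ * ‖B y‖ := by simpa using hC₁.le_mul_dist y 0
  set β₁ := B p₁ p₁ with hβ₁
  set β₂ := B p₂ p₂ with hβ₂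
  set C := 1 + β₁⁻¹ * ‖B p₁‖ * ‖p₁‖ + β₂⁻¹ * ‖B p₂‖ * ‖p₂‖
  refine ⟨(C * C₁ + 1)⁻¹, by positivity, fun K hK z => ?_⟩
  set y := z + (K * B p₁ z) • p₁ + (K * B p₂ z) • p₂ with hy
  have hBy : B z + K • (B p₁ z • B p₁ + B p₂ z • B p₂) = B y := by
    simp only [hy, map_add, map_smul, smul_add, smul_smul, add_assoc]
  have hy₁ : B p₁ y = B p₁ z * (1 + K * β₁) := by
    simp only [hy, map_add, map_smul, smul_eq_mul, h₁₂, ← hβ₁]; ring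
  have hy₂ : B p₂ y = B p₂ z * (1 + K * β₂) := by
    simp only [hy, map_add, map_smul, smul_eq_mul, hB p₂ p₁, h₁₂, ← hβ₂]; ring
  have hz : ‖z‖ ≤ C * ‖y‖ :=
    calc ‖z‖ = ‖y - (K * B p₁ z) • p₁ - (K * B p₂ z) • p₂‖ := by rw [hy]; congr 1; abel
      _ ≤ ‖y‖ + ‖(K * B p₁ z) • p₁‖ + ‖(K * B p₂ z) • p₂‖ :=
          (norm_sub_le _ _).trans (add_le_add_left (norm_sub_le _ _) _)
      _ ≤ C * ‖y‖ := by linarith [norm_mul_smul_le_of_apply_eq hK h₁ hy₁,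
          norm_mul_smul_le_of_apply_eq hK h₂ hy₂]
  rw [hBy, inv_mul_le_iff₀ (by positivity)]
  calc ‖z‖ ≤ C * (C₁ * ‖B y‖) := hz.trans (by gcongr; exact hC₁ y)
    _ ≤ (C * C₁ + 1) * ‖B y‖ := by linarith [norm_nonneg (B y)]

end CrossingFunctional

section OrthogonalPair

open ComplexConjugate

variable {E : Type*} [NormedAddCommGroup E] [NormedSpace ℂ E] [NormedSpace ℝ E]
  [IsScalarTower ℝ ℂ E] {B : E →L[ℝ] E →L[ℝ] ℝ}

theorem map_complex_smul (l : E →L[ℝ] ℂ) (η : ℂ) (v : E) :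
    l (η • v) = η.re * l v + η.im * l (Complex.I • v) := by
  rw [complex_smul_eq, map_add, map_smul, map_smul, Complex.real_smul, Complex.real_smul]

theorem exists_forall_apply_smul_eq_conj {l : E →L[ℝ] ℂ} {w : E} {β : ℂ} (hβ : β ≠ 0)
    (hw : ∀ η : ℂ, l (η • w) = η * β) {v : E} (hv : l (Complex.I • v) ≠ Complex.I * l v) :
    ∃ e, ∀ η : ℂ, l (η • e) = conj η := by
  set c := (l v - Complex.I * l (Complex.I • v)) / 2 with hc
  set d := (l v + Complex.I * l (Complex.I • v)) / 2 with hd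
  have hd0 : d ≠ 0 := fun h => hv (by
    linear_combination (-2 * Complex.I) * (hd.symm.trans h) + l (Complex.I • v) * Complex.I_sq)
  have hlv (η : ℂ) : l (η • v) = η * c + conj η * d := by
    have hconj : conj η = η.re - η.im * Complex.I := by
      apply Complex.ext <;> simp
    rw [map_complex_smul, hconj]
    linear_combination (-c) * (Complex.re_add_im η).symm + η.im * l (Complex.I • v) * Complex.I_sq
      - η.re * (hc + hd) - η.im * Complex.I * (hc - hd)
  refine ⟨(conj d)⁻¹ • (v - (c / β) • w), fun η => ?_⟩
  rw [smul_smul, smul_sub, smul_smul, map_sub, hlv, hw]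
  simp only [map_mul, map_inv₀, Complex.conj_conj]
  field_simp
  ring

theorem complexPair_apply_smul_of_isotropic {w p : E}
    (hwI : B w (Complex.I • w) = 0) (hpw : B p w = 0)
    (hpI : B p (Complex.I • w) = B w w) (η : ℂ) :
    complexPair (B w) (B p) (η • w) = η * (B w w : ℝ) := by
  rw [map_complex_smul]
  simp [hwI, hpw, hpI, Complex.ext_iff]

theorem exists_ne_zero_apply_eq_zero [FiniteDimensional ℂ E] (hE : 1 < Module.finrank ℂ E)
    {l : E →L[ℝ] ℂ} (hl : ∀ v, l (Complex.I • v) = Complex.I * l v) : ∃ x ≠ 0, l x = 0 := by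
  let L : E →ₗ[ℂ] ℂ :=
    { toFun := l
      map_add' := map_add l
      map_smul' := fun η v => by
        rw [map_complex_smul, hl, smul_eq_mul, RingHom.id_apply]
        conv_rhs => rw [← Complex.re_add_im η]
        ring }
  obtain ⟨x, hx, hx0⟩ := Submodule.exists_mem_ne_zero_of_ne_bot
    (LinearMap.ker_ne_bot_of_finrank_lt (f := L) (by rwa [Module.finrank_self]))
  exact ⟨x, hx0, hx⟩

/-- An isotropic `w` in the plane spans a complex line on which `(B w, B (I • w))` is a multiple of
the identity. If this pair is `ℂ`-linear, a small multiple of some `x` orthogonal to that line is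
added to `I • w` to destroy linearity. -/
theorem exists_orthogonal_pair_not_complexLinear [FiniteDimensional ℂ E]
    (hB : ∀ u v, B u v = B v u) (hnd : ∀ w, w ≠ 0 → ∃ w', B w w' ≠ 0) (hpos : HasPosLeviPlane B) :
    ∃ p₁ p₂ : E, 0 < B p₁ p₁ ∧ 0 < B p₂ p₂ ∧ B p₁ p₂ = 0 ∧
      (∀ η : ℂ, complexPair (B p₁) (B p₂) (η • p₁) = η * (B p₁ p₁ : ℝ)) ∧
      ∃ v, complexPair (B p₁) (B p₂) (Complex.I • v) ≠
        Complex.I * complexPair (B p₁) (B p₂) v := by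
  obtain ⟨V, hV, hVpos⟩ := hpos
  obtain ⟨w, hwV, hw0, hww, hwI⟩ := exists_isotropic_of_finrank_eq_two hB hV
  have hβ : 0 < B w w := by have := hVpos w hwV hw0; rw [leviForm, hww] at this; linarith
  have hIw : B (Complex.I • w) w = 0 := by rw [hB, hwI]
  by_cases hlin : ∀ v, complexPair (B w) (B (Complex.I • w)) (Complex.I • v) =
      Complex.I * complexPair (B w) (B (Complex.I • w)) v
  swap
  · exact ⟨w, Complex.I • w, hβ, by rwa [hww], hwI,
      complexPair_apply_smul_of_isotropic hwI hIw hww, not_forall.1 hlin⟩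
  obtain ⟨x, hx0, hx⟩ := exists_ne_zero_apply_eq_zero
    ((by omega : 1 < Module.finrank ℂ V).trans_le V.finrank_le) hlin
  obtain ⟨hwx, hIwx⟩ := Complex.ext_iff.1 hx
  simp only [complexPair_apply, Complex.zero_re, Complex.zero_im] at hwx hIwx
  obtain ⟨κ, hκ, hκx⟩ : ∃ κ > 0, κ ^ 2 * |B x x| < B w w := by
    refine ⟨√(B w w / (|B x x| + 1)), by positivity, ?_⟩
    rw [Real.sq_sqrt (by positivity), div_mul_eq_mul_div, div_lt_iff₀ (by positivity)]
    nlinarith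
  have hp (v : E) : B (Complex.I • w + κ • x) v = B (Complex.I • w) v + κ * B x v := by simp
  refine ⟨w, Complex.I • w + κ • x, hβ, ?_, by simp [hwI, hwx],
    complexPair_apply_smul_of_isotropic hwI (by rw [hp, hIw, hB x, hwx]; simp)
      (by rw [hp, hww, hB x, hIwx]; simp), ?_⟩
  · rw [hp, hB (Complex.I • w), hB x (_ + _), hp, hp, hww, hB x (Complex.I • w), hIwx]
    nlinarith [neg_abs_le (B x x), sq_nonneg κ]
  · by_contra! h
    obtain ⟨v, hv⟩ := hnd x hx0
    have h₁ := congrArg Complex.re (hlin v)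
    have h₂ := congrArg Complex.re (h v)
    simp only [complexPair_apply, Complex.mul_re, Complex.I_re, Complex.I_im, hp] at h₁ h₂
    exact (mul_ne_zero hκ.ne' hv) (by linarith)

theorem exists_orthogonal_pair [FiniteDimensional ℂ E] (hB : ∀ u v, B u v = B v u)
    (hnd : ∀ w, w ≠ 0 → ∃ w', B w w' ≠ 0) (hpos : HasPosLeviPlane B) :
    ∃ p₁ p₂ e₁ e₂ : E, 0 < B p₁ p₁ ∧ 0 < B p₂ p₂ ∧ B p₁ p₂ = 0 ∧
      (∀ η : ℂ, complexPair (B p₁) (B p₂) (η • e₁) = η) ∧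
      ∀ η : ℂ, complexPair (B p₁) (B p₂) (η • e₂) = conj η := by
  obtain ⟨p₁, p₂, h₁, h₂, h₁₂, hp₁, v, hv⟩ := exists_orthogonal_pair_not_complexLinear hB hnd hpos
  have hβ : ((B p₁ p₁ : ℝ) : ℂ) ≠ 0 := Complex.ofReal_ne_zero.2 h₁.ne'
  obtain ⟨e₂, he₂⟩ := exists_forall_apply_smul_eq_conj hβ hp₁ hv
  exact ⟨p₁, p₂, ((B p₁ p₁ : ℝ) : ℂ)⁻¹ • p₁, e₂, h₁, h₂, h₁₂,
    fun η => by rw [smul_smul, hp₁, inv_mul_cancel_right₀ hβ], he₂⟩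

end OrthogonalPair

section Taylor

variable {E : Type*} [NormedAddCommGroup E] [NormedSpace ℝ E]

theorem abs_sub_taylor_le_of_convex {f : E → ℝ} {f' : E → E →L[ℝ] ℝ} {s : Set E} (hs : Convex ℝ s)
    (hf : ∀ x ∈ s, HasFDerivAt f (f' x) x) {B : E →L[ℝ] E →L[ℝ] ℝ} {ω : ℝ} (hω : 0 ≤ ω)
    (hf' : ∀ x ∈ s, ∀ y ∈ s, ‖f' x - f' y - B (x - y)‖ ≤ ω * ‖x - y‖) {z v : E} (hz : z ∈ s)
    (hzv : z + v ∈ s) : |f (z + v) - (f z + f' z v + B v v / 2)| ≤ ω * ‖v‖ ^ 2 := by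
  have hseg (t : ℝ) (ht : t ∈ Set.Icc (0 : ℝ) 1) : z + t • v ∈ s := by
    simpa using hs.add_smul_sub_mem hz hzv ht
  have hderiv (t : ℝ) (ht : t ∈ Set.Icc (0 : ℝ) 1) : HasDerivWithinAt
      (fun t : ℝ => f (z + t • v) - t * f' z v - t ^ 2 * (B v v / 2))
      ((f' (z + t • v) - f' z - B (t • v)) v) (Set.Icc 0 1) t := by
    have hline : HasDerivAt (fun t : ℝ => z + t • v) v t := by
      simpa using ((hasDerivAt_id t).smul_const v).const_add z
    refine ((((hf _ (hseg t ht)).comp_hasDerivAt t hline).sub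
      ((hasDerivAt_id t).mul_const (f' z v))).sub
      ((hasDerivAt_pow 2 t).mul_const (B v v / 2))).hasDerivWithinAt.congr_deriv ?_
    simp only [map_smul, sub_apply, smul_apply, smul_eq_mul]
    ring
  have hbound (t : ℝ) (ht : t ∈ Set.Ico (0 : ℝ) 1) :
      ‖(f' (z + t • v) - f' z - B (t • v)) v‖ ≤ ω * ‖v‖ ^ 2 := by
    have htv : ‖t • v‖ ≤ ‖v‖ := by
      rw [norm_smul, Real.norm_of_nonneg ht.1]
      exact mul_le_of_le_one_left (norm_nonneg v) ht.2.le
    have h := hf' _ (hseg t ⟨ht.1, ht.2.le⟩) z hz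
    rw [add_sub_cancel_left] at h
    calc ‖(f' (z + t • v) - f' z - B (t • v)) v‖ ≤ ω * ‖t • v‖ * ‖v‖ :=
          ContinuousLinearMap.le_of_opNorm_le _ h v
      _ ≤ ω * ‖v‖ * ‖v‖ := by gcongr
      _ = ω * ‖v‖ ^ 2 := by ring
  convert norm_image_sub_le_of_norm_deriv_le_segment_01' hderiv hbound using 1
  rw [Real.norm_eq_abs]
  congr 1
  simp only [one_smul, zero_smul, add_zero]
  ring

theorem exists_ball_forall_abs_sub_taylor_le {ρ : E → ℝ} {Ω : Set E} (hΩ : IsOpen Ω)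
    (hρ : ContDiffOn ℝ 2 ρ Ω) {p : E} (hp : p ∈ Ω) {ω : ℝ} (hω : 0 < ω) :
    ∃ s > 0, ball p s ⊆ Ω ∧ ∀ z v, z ∈ ball p s → z + v ∈ ball p s →
      |ρ (z + v) - (ρ z + fderiv ℝ ρ z v + fderiv ℝ (fderiv ℝ ρ) p v v / 2)| ≤ ω * ‖v‖ ^ 2 := by
  have hstrict : HasStrictFDerivAt (fderiv ℝ ρ) (fderiv ℝ (fderiv ℝ ρ) p) p :=
    ((hρ.fderiv_of_isOpen (m := 1) hΩ one_add_one_eq_two.le).contDiffAt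
      (hΩ.mem_nhds hp)).hasStrictFDerivAt one_ne_zero
  obtain ⟨s, hs, hball⟩ := Metric.eventually_nhds_iff_ball.1
    ((hstrict.isLittleO.def hω).and (continuousAt_fst.eventually (hΩ.mem_nhds hp)))
  simp only [← ball_prod_same, Set.mem_prod, Prod.forall, and_imp] at hball
  have hsub : ball p s ⊆ Ω := fun x hx => (hball x x hx hx).2
  refine ⟨s, hs, hsub, fun z v => abs_sub_taylor_le_of_convex (convex_ball p s) (fun x hx => ?_)
    hω.le fun x hx y hy => (hball x y hx hy).1⟩
  exact (hρ.differentiableOn two_ne_zero).hasFDerivAt (hΩ.mem_nhds (hsub hx))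

theorem mul_sq_le_taylor {B : E →L[ℝ] E →L[ℝ] ℝ} {L : E →L[ℝ] ℝ} {w c : E}
    {t x m ω : ℝ}
    (hw : L w = 0) (hc : L c = x)
    (h : m ≤ x + B (w + t • c) (w + t • c) / 2 - ω * ‖w + t • c‖ ^ 2) :
    m * t ^ 2 ≤ L (t • (w + t • c)) + B (t • (w + t • c)) (t • (w + t • c)) / 2 -
      ω * ‖t • (w + t • c)‖ ^ 2 := by
  have hL : L (w + t • c) = t * x := by rw [map_add, hw, map_smul, hc, zero_add, smul_eq_mul]
  simp only [map_smul, smul_apply, smul_eq_mul, hL, norm_smul, mul_pow, Real.norm_eq_abs, sq_abs]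
  linarith [mul_le_mul_of_nonneg_left h (sq_nonneg t)]

end Taylor

section Pushable

variable {E : Type*} [NormedAddCommGroup E] [NormedSpace ℂ E]

/-- The points of `Ω` can be moved continuously, by boundaries of quadratic discs in `Ω` of size at
most `t`, so that `τ` decreases nowhere and increases by at least `δ` on `U`. -/
def IsPushable (τ : E → ℝ) (Ω U : Set E) (t δ : ℝ) : Prop :=
  ∃ a₁ a₂ : E → E, ContinuousOn a₁ Ω ∧ ContinuousOn a₂ Ω ∧ ∀ z ∈ Ω, ‖a₁ z‖ + ‖a₂ z‖ ≤ t ∧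
    closedBall z (‖a₁ z‖ + ‖a₂ z‖) ⊆ Ω ∧ ∀ η : ℂ, ‖η‖ = 1 →
      τ z ≤ τ (quadDisc z (a₁ z) (a₂ z) η) ∧
      (z ∈ U → τ z + δ ≤ τ (quadDisc z (a₁ z) (a₂ z) η))

/-- Near `p`, the function `τ` can be increased by a definite amount by arbitrarily small quadratic
discs. The neighbourhood of `p` does not depend on the size of the discs, so that finitely many such
moves can be made one after the other. -/
def IsLocallyPushable (τ : E → ℝ) (Ω : Set E) (p : E) : Prop :=
  ∃ s > 0, ∀ᶠ t in 𝓝[>] 0, ∃ δ > 0, IsPushable τ Ω (ball p s) t δ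

theorem IsPushable.mono_right {τ : E → ℝ} {Ω U : Set E} {t δ δ' : ℝ} (h : IsPushable τ Ω U t δ)
    (hδ : δ' ≤ δ) : IsPushable τ Ω U t δ' := by
  obtain ⟨a₁, a₂, ha₁, ha₂, ha⟩ := h
  refine ⟨a₁, a₂, ha₁, ha₂, fun z hz => ⟨(ha z hz).1, (ha z hz).2.1, fun η hη => ?_⟩⟩
  obtain ⟨hle, hgain⟩ := (ha z hz).2.2 η hη
  exact ⟨hle, fun hzU => by linarith [hgain hzU]⟩

end Pushable

section LocalPushing

variable {E : Type*} [NormedAddCommGroup E] [NormedSpace ℝ E]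

theorem exists_cutoff {Y : Type*} [PseudoMetricSpace Y] (p : Y) {R : ℝ} (hR : 0 < R) :
    ∃ χ : Y → ℝ, Continuous χ ∧ (∀ z, χ z ∈ Set.Icc (0 : ℝ) 1) ∧ (∀ z ∈ ball p R, χ z = 1) ∧
      tsupport χ ⊆ closedBall p (2 * R) := by
  obtain ⟨χ, hχ₀, hχ₁, hχ⟩ := exists_continuous_zero_one_of_isClosed
    (isOpen_ball (x := p) (ε := 2 * R)).isClosed_compl (isClosed_closedBall (x := p) (ε := R))
    (Set.disjoint_compl_left_iff_subset.2 (closedBall_subset_ball (by linarith)))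
  refine ⟨χ, χ.continuous, hχ, fun z hz => hχ₁ (ball_subset_closedBall hz),
    closure_minimal (fun z hz => ?_) isClosed_closedBall⟩
  exact ball_subset_closedBall (by_contra fun h => hz (hχ₀ h))

theorem continuous_smul_of_tsupport_subset {χ : E → ℝ} {w : E → E} {U : Set E} (hχ : Continuous χ)
    (hw : ContinuousOn w U) (hU : IsOpen U) (hχU : tsupport χ ⊆ U) :
    Continuous fun z => χ z • w z :=
  (hχ.continuousOn.smul hw).continuous_of_tsupport_subset hU
    ((tsupport_smul_subset_left χ w).trans hχU)

variable [NormedSpace ℂ E] {τ : E → ℝ} {Ω : Set E} {p : E}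

theorem isLocallyPushable_of_forall_le {s m : ℝ} (hs : 0 < s) (hm : 0 < m) (hΩ : ball p s ⊆ Ω)
    {W c : E → E} (hW : ContinuousOn W (ball p s)) (hc : ContinuousOn c (ball p s))
    (hbound : ∀ z ∈ ball p s, ∀ t ∈ Set.Icc 0 s, ‖W z‖ + t * ‖c z‖ ≤ 2)
    (hgain : ∀ z ∈ ball p s, ∀ t ∈ Set.Icc 0 s, ∀ η : ℂ, ‖η‖ = 1 →
      τ z + m * t ^ 2 ≤ τ (quadDisc z (t • W z) (t ^ 2 • c z) η)) :
    IsLocallyPushable τ Ω p := by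
  obtain ⟨χ, hχ, hχI, hχ₁, hχs⟩ := exists_cutoff p (show 0 < s / 4 by linarith)
  have hχs' : tsupport χ ⊆ ball p s := hχs.trans (closedBall_subset_ball (by linarith))
  refine ⟨s / 4, by linarith, ?_⟩
  filter_upwards [Ioo_mem_nhdsGT (show 0 < s / 2 by linarith)] with t ht
  have ht₀ : 0 < t := ht.1
  have htχ (z : E) : t / 2 * χ z ∈ Set.Icc 0 (t / 2) :=
    ⟨mul_nonneg (by linarith) (hχI z).1, mul_le_of_le_one_right (by linarith) (hχI z).2⟩
  have htχs (z : E) : t / 2 * χ z ∈ Set.Icc 0 s := ⟨(htχ z).1, by linarith [(htχ z).2, ht.2]⟩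
  refine ⟨m * (t / 2) ^ 2, by positivity, fun z => (t / 2 * χ z) • W z,
    fun z => (t / 2 * χ z) ^ 2 • c z, ?_, ?_, fun z hz => ?_⟩
  · convert ((continuous_smul_of_tsupport_subset hχ hW isOpen_ball hχs').const_smul
      (t / 2)).continuousOn using 2
    rw [Pi.smul_apply, mul_smul]
  · convert ((continuous_smul_of_tsupport_subset hχ (hχ.continuousOn.smul hc) isOpen_ball
      hχs').const_smul ((t / 2) ^ 2)).continuousOn using 2
    simp only [mul_pow, mul_smul, sq (χ _), Pi.smul_apply, Pi.smul_apply']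
  by_cases hzs : z ∈ closedBall p (2 * (s / 4))
  · have hzp : z ∈ ball p s := closedBall_subset_ball (by linarith) hzs
    have hsize : ‖(t / 2 * χ z) • W z‖ + ‖(t / 2 * χ z) ^ 2 • c z‖ ≤ t := by
      rw [norm_smul, norm_smul, Real.norm_of_nonneg (htχ z).1,
        Real.norm_of_nonneg (sq_nonneg _)]
      calc _ = t / 2 * χ z * (‖W z‖ + t / 2 * χ z * ‖c z‖) := by ring
        _ ≤ t / 2 * 2 := mul_le_mul (htχ z).2 (hbound z hzp _ (htχs z))
          (add_nonneg (norm_nonneg _) (mul_nonneg (htχ z).1 (norm_nonneg _))) (by linarith)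
        _ = t := by ring
    refine ⟨hsize, fun x hx => hΩ ?_, fun η hη => ?_⟩
    · rw [mem_ball]
      linarith [mem_closedBall.1 hx, mem_closedBall.1 hzs, dist_triangle x z p, ht.2]
    · have h := hgain z hzp _ (htχs z) η hη
      refine ⟨le_trans (le_add_of_nonneg_right (by positivity)) h, fun hzU => ?_⟩
      simpa only [hχ₁ z hzU, mul_one] using h
  · have hχz : χ z = 0 := image_eq_zero_of_notMem_tsupport fun h => hzs (hχs h)
    have hzU : z ∉ ball p (s / 4) := fun h =>
      hzs (ball_subset_closedBall (ball_subset_ball (by linarith) h))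
    simp [hχz, hzU, quadDisc, hz, ht₀.le]

variable [IsScalarTower ℝ ℂ E]

theorem exists_tangent_fields {L : E → E →L[ℝ] ℝ} {U : Set E} (hU : IsOpen U)
    (hL : ContinuousOn L U) (hp : p ∈ U) (hne : L p ≠ 0) {w : E} (hw : ∀ η : ℂ, L p (η • w) = 0)
    (κ : ℂ) : ∃ W c : E → E, W p = w ∧ ∃ s > 0, ContinuousOn W (ball p s) ∧
      ContinuousOn c (ball p s) ∧
      ∀ z ∈ ball p s, ∀ η : ℂ, L z (η • W z) = 0 ∧ L z (η • c z) = (η * κ).re := by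
  set Λ : E → StrongDual ℂ E := fun z => StrongDual.extendRCLike (𝕜 := ℂ) (L z) with hΛ
  have hre (z x : E) : L z x = (Λ z x).re :=
    (StrongDual.re_extendRCLike_apply (𝕜 := ℂ) (L z) x).symm
  have hΛc (x : E) : ContinuousOn (fun z => Λ z x) U := by
    simp only [hΛ, StrongDual.extendRCLike_apply]
    fun_prop
  have hΛw : Λ p w = 0 := by
    have hker : L p w = 0 := by simpa using hw 1
    simp [hΛ, StrongDual.extendRCLike_apply, hker, hw]
  obtain ⟨e, he⟩ : ∃ e, Λ p e ≠ 0 := by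
    obtain ⟨e, he⟩ := DFunLike.ne_iff.1 hne
    exact ⟨e, fun h => he (by simp [hre, h])⟩
  obtain ⟨s, hs, hsU⟩ := Metric.eventually_nhds_iff_ball.1
    ((hU.eventually_mem hp).and (((hΛc e).continuousAt (hU.mem_nhds hp)).eventually_ne he))
  have hsub : ball p s ⊆ U := fun z hz => (hsU z hz).1
  refine ⟨fun z => w - (Λ z w / Λ z e) • e, fun z => (κ / Λ z e) • e, by simp [hΛw], s, hs,
    ?_, ?_, fun z hz η => ⟨?_, ?_⟩⟩
  · exact continuousOn_const.sub ((((hΛc w).mono hsub).div ((hΛc e).mono hsub)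
      fun z hz => (hsU z hz).2).smul continuousOn_const)
  · exact (continuousOn_const.div ((hΛc e).mono hsub) fun z hz => (hsU z hz).2).smul
      continuousOn_const
  · simp [hre, (hsU z hz).2]
  · simp [hre, (hsU z hz).2, -Complex.mul_re]

theorem eventually_forall_leviForm_lt (B : E →L[ℝ] E →L[ℝ] ℝ) {W c : E → E}
    (hW : ContinuousAt W p) (hc : ContinuousAt c p) (hWp : ‖W p‖ = 1)
    (hlev : 0 < leviForm B (W p)) :
    ∀ᶠ x : E × ℝ in 𝓝 (p, 0), ∀ η ∈ sphere (0 : ℂ) 1, leviForm B (W p) / 16 <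
      (η ^ 2 * -(holForm B (W p) (W p) / 4)).re +
        B (η • W x.1 + x.2 • η ^ 2 • c x.1) (η • W x.1 + x.2 • η ^ 2 • c x.1) / 2 -
        leviForm B (W p) / 8 * ‖η • W x.1 + x.2 • η ^ 2 • c x.1‖ ^ 2 := by
  refine (isCompact_sphere 0 1).eventually_forall_of_forall_eventually fun η hη => ?_
  have hu : ContinuousAt
      (fun x : (E × ℝ) × ℂ => x.2 • W x.1.1 + x.1.2 • x.2 ^ 2 • c x.1.1) ((p, 0), η) := by
    have hfst : ContinuousAt (fun x : (E × ℝ) × ℂ => x.1.1) ((p, 0), η) := by fun_prop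
    exact (continuousAt_snd.smul (ContinuousAt.comp hW hfst)).add
      (.smul (by fun_prop) (.smul (by fun_prop) (ContinuousAt.comp hc hfst)))
  have hη₁ : ‖η‖ = 1 := mem_sphere_zero_iff_norm.1 hη
  refine ContinuousAt.eventually_lt continuousAt_const (.sub (.add (by fun_prop) ?_) ?_) ?_
  · exact ((B.continuous.continuousAt.comp hu).clm_apply hu).div_const 2
  · exact continuousAt_const.mul (hu.norm.pow 2)
  · have hre : (η ^ 2 * -(holForm B (W p) (W p) / 4)).re =
        -(η ^ 2 * holForm B (W p) (W p)).re / 4 := by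
      rw [mul_neg, Complex.neg_re, ← mul_div_assoc, Complex.div_ofNat_re, neg_div]
    simp only [zero_smul, add_zero,
      apply_smul_self_eq_leviForm_add_holForm, norm_smul, hη₁, hWp, hre]
    linarith

theorem quadDisc_smul_eq (z w c : E) (t : ℝ) (η : ℂ) :
    quadDisc z (t • w) (t ^ 2 • c) η = z + t • (η • w + t • η ^ 2 • c) := by
  rw [quadDisc, smul_add, smul_smul t, ← sq, smul_comm t, smul_comm (t ^ 2), add_assoc]

theorem isLocallyPushable_of_taylor_le {B : E →L[ℝ] E →L[ℝ] ℝ} {L : E → E →L[ℝ] ℝ} {s : ℝ}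
    (hs : 0 < s) (hΩ : ball p s ⊆ Ω) (hL : ContinuousOn L (ball p s)) (hne : L p ≠ 0) {w : E}
    (hw : ‖w‖ = 1) (hker : ∀ η : ℂ, L p (η • w) = 0) (hlev : 0 < leviForm B w)
    (htaylor : ∀ z v, z ∈ ball p s → z + v ∈ ball p s →
      τ z + L z v + B v v / 2 - leviForm B w / 8 * ‖v‖ ^ 2 ≤ τ (z + v)) :
    IsLocallyPushable τ Ω p := by
  -- This `κ` makes the term linear in `c` cancel the `η ^ 2`-harmonic of `B (η • w) (η • w) / 2`,
  -- leaving only the Levi form.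
  obtain ⟨W, c, rfl, s₁, hs₁, hW, hc, hLWc⟩ := exists_tangent_fields isOpen_ball hL
    (mem_ball_self hs) hne hker (-(holForm B w w / 4))
  have hWp := hW.continuousAt (ball_mem_nhds p hs₁)
  have hcp := hc.continuousAt (ball_mem_nhds p hs₁)
  have hsize : ∀ᶠ x : E × ℝ in 𝓝 (p, 0), ‖W x.1‖ + x.2 * ‖c x.1‖ < 2 := by
    refine ContinuousAt.eventually_lt (.add ?_ (continuousAt_snd.mul ?_)) continuousAt_const
      (by simp [hw])
    · exact (ContinuousAt.comp (f := Prod.fst) hWp continuousAt_fst).norm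
    · exact (ContinuousAt.comp (f := Prod.fst) hcp continuousAt_fst).norm
  obtain ⟨s₂, hs₂, hball⟩ := Metric.eventually_nhds_iff_ball.1
    ((eventually_forall_leviForm_lt B hWp hcp hw hlev).and hsize)
  simp only [← ball_prod_same, Set.mem_prod, Prod.forall, and_imp] at hball
  obtain ⟨σ, hσ, hσ'⟩ : ∃ σ > 0, σ < min (s / 4) (min s₁ s₂) :=
    exists_between (by positivity)
  simp only [lt_min_iff] at hσ'
  have hsub {s'} (h : σ < s') : ball p σ ⊆ ball p s' := ball_subset_ball h.le
  have hball' (z : E) (hz : z ∈ ball p σ) (t : ℝ) (ht : t ∈ Set.Icc 0 σ) :=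
    hball z t (hsub hσ'.2.2 hz) (by
      rw [mem_ball_zero_iff, Real.norm_of_nonneg ht.1]; linarith [ht.2])
  refine isLocallyPushable_of_forall_le (m := leviForm B (W p) / 16) hσ (by positivity)
    ((hsub (by linarith)).trans hΩ) (hW.mono (hsub hσ'.2.1)) (hc.mono (hsub hσ'.2.1))
    (fun z hz t ht => (hball' z hz t ht).2.le) fun z hz t ht η hη => ?_
  have hu : ‖η • W z + t • η ^ 2 • c z‖ < 2 := by
    refine lt_of_le_of_lt ((norm_add_le _ _).trans_eq ?_) (hball' z hz t ht).2
    simp [norm_smul, hη, abs_of_nonneg ht.1]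
  have hzu : z + t • (η • W z + t • η ^ 2 • c z) ∈ ball p s := by
    rw [mem_ball_iff_norm, add_sub_right_comm]
    refine (norm_add_le _ _).trans_lt ?_
    rw [norm_smul, Real.norm_of_nonneg ht.1]
    nlinarith [mem_ball_iff_norm.1 hz, ht.1, ht.2, norm_nonneg (η • W z + t • η ^ 2 • c z)]
  have hz₁ := hLWc z (hsub hσ'.2.1 hz)
  have hgain := mul_sq_le_taylor (hz₁ η).1 (hz₁ (η ^ 2)).2
    ((hball' z hz t ht).1 η (mem_sphere_zero_iff_norm.2 hη)).le
  rw [quadDisc_smul_eq]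
  linarith [htaylor z _ (hsub (by linarith) hz) hzu]

theorem exists_norm_eq_one_mem_forall_apply_smul_eq_zero {V : Submodule ℂ E}
    (hV : 1 < Module.finrank ℂ V) (L : E →L[ℝ] ℝ) :
    ∃ w ∈ V, ‖w‖ = 1 ∧ ∀ η : ℂ, L (η • w) = 0 := by
  have : FiniteDimensional ℂ V := Module.finite_of_finrank_pos (by omega)
  set Λ : StrongDual ℂ E := StrongDual.extendRCLike (𝕜 := ℂ) L
  obtain ⟨⟨x, hxV⟩, hx, hx₀⟩ := (Submodule.ne_bot_iff _).1 (LinearMap.ker_ne_bot_of_finrank_lt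
    (f := (Λ : E →ₗ[ℂ] ℂ).domRestrict V) (by rwa [Module.finrank_self]))
  have hΛx : Λ x = 0 := hx
  refine ⟨(‖x‖⁻¹ : ℂ) • x, V.smul_mem _ hxV, norm_smul_inv_norm fun h => hx₀ (by simp [h]),
    fun η => ?_⟩
  have hΛ : Λ (η • (‖x‖⁻¹ : ℂ) • x) = 0 := by rw [map_smul, map_smul, hΛx, smul_zero, smul_zero]
  rw [← StrongDual.re_extendRCLike_apply (𝕜 := ℂ) L, hΛ, map_zero]

theorem isLocallyPushable_add_convex {ρ h : E → ℝ} (hΩ : IsOpen Ω) (hρ : ContDiffOn ℝ 2 ρ Ω)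
    (hp : p ∈ Ω) (hpos : HasPosLeviPlane (fderiv ℝ (fderiv ℝ ρ) p)) {L : E → E →L[ℝ] ℝ}
    (hL : Continuous L) (hconv : ∀ z v, h z + L z v ≤ h (z + v)) (hne : fderiv ℝ ρ p + L p ≠ 0) :
    IsLocallyPushable (fun z => ρ z + h z) Ω p := by
  obtain ⟨V, hV, hVpos⟩ := hpos
  obtain ⟨w, hwV, hw, hker⟩ := exists_norm_eq_one_mem_forall_apply_smul_eq_zero
    (by rw [hV]; exact one_lt_two) (fderiv ℝ ρ p + L p)
  have hlev := hVpos w hwV (norm_ne_zero_iff.1 (by rw [hw]; exact one_ne_zero))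
  obtain ⟨s, hs, hsΩ, htaylor⟩ := exists_ball_forall_abs_sub_taylor_le hΩ hρ hp
    (show 0 < leviForm (fderiv ℝ (fderiv ℝ ρ) p) w / 8 by linarith)
  refine isLocallyPushable_of_taylor_le hs hsΩ
    (((hρ.continuousOn_fderiv_of_isOpen hΩ one_le_two).mono hsΩ).add hL.continuousOn)
    hne hw hker hlev fun z v hz hzv => ?_
  rw [Pi.add_apply, add_apply]
  linarith [(abs_le.1 (htaylor z v hz hzv)).1, hconv z v]

end LocalPushing

section Levels

theorem eventually_mul_lt (A : ℝ) {B : ℝ} (hB : 0 < B) : ∀ᶠ e in 𝓝[>] (0 : ℝ), e * A < B :=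
  ((continuous_mul_const A).tendsto' 0 0 (zero_mul A)).mono_left nhdsWithin_le_nhds
    |>.eventually_lt_const hB

theorem exists_forall_dist_lt_sub_lt {Y : Type*} [PseudoMetricSpace Y] {τ : Y → ℝ} {C Ω : Set Y}
    (hC : IsCompact C) (hΩ : IsOpen Ω) (hCΩ : C ⊆ Ω) (hτ : ContinuousOn τ Ω) {ε : ℝ}
    (hε : 0 < ε) : ∃ δ > 0, ∀ x ∈ C, ∀ y, dist y x < δ → τ x - ε < τ y := by
  obtain ⟨δ, hδ, h⟩ := Metric.mem_uniformity_dist.1 (hC.uniformContinuousAt_of_continuousAt τ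
    (fun x hx => hτ.continuousAt (hΩ.mem_nhds (hCΩ hx))) (Metric.dist_mem_uniformity hε))
  refine ⟨δ, hδ, fun x hx y hy => ?_⟩
  have hxy : dist (τ x) (τ y) < ε := h (dist_comm x y ▸ hy) hx
  linarith [(abs_lt.1 (Real.dist_eq _ _ ▸ hxy)).2]

variable {E : Type*} [NormedAddCommGroup E] [NormedSpace ℂ E] [FiniteDimensional ℂ E]
  {P : DiscProblem E} {D : E} {g : ℂ → E} {τ : E → ℝ}

namespace DiscProblem

theorem Admissible.exists_attach_sub_lt (hg : P.Admissible D g) (hτ : ContinuousOn τ P.Ω)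
    {A₁ A₂ : ℂ → E} (hA₁ : ContinuousOn A₁ (sphere 0 1)) (hA₂ : ContinuousOn A₂ (sphere 0 1))
    (hΩ : ∀ ζ ∈ sphere (0 : ℂ) 1, closedBall (g ζ) (‖A₁ ζ‖ + ‖A₂ ζ‖) ⊆ P.Ω)
    {ε : ℝ} (hε : 0 < ε) :
    ∃ g', P.Admissible D g' ∧ ∀ ζ ∈ sphere (0 : ℂ) 1, ∃ η : ℂ, ‖η‖ = 1 ∧
      dist (g' ζ) (quadDisc (g ζ) (A₁ ζ) (A₂ ζ) η) < ε ∧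
      τ (quadDisc (g ζ) (A₁ ζ) (A₂ ζ) η) - ε < τ (g' ζ) := by
  set Φ : ℂ × ℂ → E := fun x => quadDisc (g x.1) (A₁ x.1) (A₂ x.1) x.2
  have hΦc : ContinuousOn Φ (sphere 0 1 ×ˢ sphere 0 1) := by
    have hfst : Set.MapsTo Prod.fst (sphere (0 : ℂ) 1 ×ˢ sphere (0 : ℂ) 1) (sphere 0 1) :=
      fun x hx => hx.1
    exact ((hg.continuousOn_sphere.comp continuousOn_fst hfst).add
      (continuousOn_snd.smul (hA₁.comp continuousOn_fst hfst))).add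
      ((continuousOn_snd.pow 2).smul (hA₂.comp continuousOn_fst hfst))
  have hΦΩ : Φ '' (sphere 0 1 ×ˢ sphere 0 1) ⊆ P.Ω := by
    rintro _ ⟨x, hx, rfl⟩
    exact hΩ _ hx.1 (dist_quadDisc_le _ _ _ (mem_sphere_zero_iff_norm.1 hx.2))
  obtain ⟨s, hs, hsτ⟩ := exists_forall_dist_lt_sub_lt
    (((isCompact_sphere 0 1).prod (isCompact_sphere 0 1)).image_of_continuousOn hΦc) P.isOpen_Ω
    hΦΩ hτ hε
  obtain ⟨g', hg', h⟩ := hg.exists_attach hA₁ hA₂ hΩ (lt_min hε hs)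
  refine ⟨g', hg', fun ζ hζ => ?_⟩
  obtain ⟨η, hη, hd⟩ := h ζ hζ
  exact ⟨η, hη, hd.trans_le (min_le_left _ _),
    hsτ _ ⟨(ζ, η), ⟨hζ, mem_sphere_zero_iff_norm.2 hη⟩, rfl⟩ _ (hd.trans_le (min_le_right _ _))⟩

theorem Admissible.exists_push (hg : P.Admissible D g) (hτ : ContinuousOn τ P.Ω) {U : Set E}
    {t δ ε : ℝ} (hpush : IsPushable τ P.Ω U t δ) (hε : 0 < ε) :
    ∃ g', P.Admissible D g' ∧ ∀ ζ ∈ sphere (0 : ℂ) 1, dist (g' ζ) (g ζ) ≤ t + ε ∧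
      τ (g ζ) - ε ≤ τ (g' ζ) ∧ (g ζ ∈ U → τ (g ζ) + δ - ε ≤ τ (g' ζ)) := by
  obtain ⟨a₁, a₂, ha₁, ha₂, ha⟩ := hpush
  obtain ⟨g', hg', h⟩ := hg.exists_attach_sub_lt hτ (ha₁.comp hg.continuousOn_sphere hg.mem_Ω)
    (ha₂.comp hg.continuousOn_sphere hg.mem_Ω) (fun ζ hζ => (ha _ (hg.mem_Ω ζ hζ)).2.1) hε
  refine ⟨g', hg', fun ζ hζ => ?_⟩
  obtain ⟨η, hη, hd, hlt⟩ := h ζ hζ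
  rw [Function.comp_apply, Function.comp_apply] at hd hlt
  obtain ⟨hsize, -, hgain⟩ := ha _ (hg.mem_Ω ζ hζ)
  refine ⟨?_, by linarith [(hgain η hη).1], fun hU => by linarith [(hgain η hη).2 hU]⟩
  linarith [dist_triangle (g' ζ) (quadDisc (g ζ) (a₁ (g ζ)) (a₂ (g ζ)) η) (g ζ),
    dist_quadDisc_le (g ζ) (a₁ (g ζ)) (a₂ (g ζ)) hη]

theorem Admissible.exists_push_finset (hg : P.Admissible D g) (hτ : ContinuousOn τ P.Ω)
    {ι : Type*} {J : Finset ι} {U : ι → Set E} {t δ : ℝ} (ht : 0 < t)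
    (hpush : ∀ p ∈ J, IsPushable τ P.Ω (U p) t δ) {ε : ℝ} (hε : 0 < ε) :
    ∃ g', P.Admissible D g' ∧ ∀ ζ ∈ sphere (0 : ℂ) 1, dist (g' ζ) (g ζ) ≤ J.card * (2 * t) ∧
      τ (g ζ) - ε ≤ τ (g' ζ) ∧
      ∀ p ∈ J, closedBall (g ζ) (J.card * (2 * t)) ⊆ U p → τ (g ζ) + δ - ε ≤ τ (g' ζ) := by
  classical
  induction J using Finset.induction_on generalizing ε with
  | empty => exact ⟨g, hg, fun ζ _ => by simp [hε.le]⟩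
  | insert p J hpJ ih =>
    obtain ⟨g₁, hg₁, h₁⟩ := ih (fun x hx => hpush x (Finset.mem_insert_of_mem hx)) (half_pos hε)
    obtain ⟨g₂, hg₂, h₂⟩ := hg₁.exists_push hτ (hpush p (Finset.mem_insert_self p J))
      (lt_min ht (half_pos hε))
    have hεt : min t (ε / 2) ≤ t := min_le_left _ _
    have hεε : min t (ε / 2) ≤ ε / 2 := min_le_right _ _
    rw [Finset.card_insert_of_notMem hpJ, Nat.cast_succ, add_one_mul]
    refine ⟨g₂, hg₂, fun ζ hζ => ?_⟩
    obtain ⟨hd₁, hτ₁, hgain₁⟩ := h₁ ζ hζ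
    obtain ⟨hd₂, hτ₂, hgain₂⟩ := h₂ ζ hζ
    refine ⟨by linarith [dist_triangle (g₂ ζ) (g₁ ζ) (g ζ)], by linarith, fun q hq hqU => ?_⟩
    have hsub : closedBall (g ζ) (J.card * (2 * t)) ⊆ U q :=
      (closedBall_subset_closedBall (by linarith)).trans hqU
    obtain rfl | hqJ := Finset.mem_insert.1 hq
    · linarith [hgain₂ (hsub hd₁)]
    · linarith [hgain₁ q hqJ hsub]

theorem exists_push_near (P : DiscProblem E) (D : E) (hτ : ContinuousOn τ P.Ω) {M : Set E}
    (hM : IsCompact M) (hpush : ∀ p ∈ M, IsLocallyPushable τ P.Ω p) {d : ℝ}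
    (hd : 0 < d) :
    ∃ δ > 0, ∃ W, IsOpen W ∧ M ⊆ W ∧ ∀ g, P.Admissible D g → ∀ ε > 0, ∃ g', P.Admissible D g' ∧
      ∀ ζ ∈ sphere (0 : ℂ) 1, dist (g' ζ) (g ζ) ≤ d ∧ τ (g ζ) - ε ≤ τ (g' ζ) ∧
        (g ζ ∈ W → τ (g ζ) + δ ≤ τ (g' ζ)) := by
  choose! s hs hpush using hpush
  obtain ⟨J, hJM, hMJ⟩ := hM.elim_nhds_subcover (fun p => ball p (s p / 2))
    (fun p hpM => ball_mem_nhds p (half_pos (hs p hpM)))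
  have hsmall (c : ℝ) (hc : 0 < c) : ∀ᶠ t : ℝ in 𝓝[>] 0, J.card * (2 * t) < c :=
    (eventually_mul_lt (J.card * 2) hc).mono fun t ht => by linarith
  obtain ⟨t, ⟨htd, htJ⟩, ht : 0 < t⟩ := (((hsmall d hd).and ((eventually_all_finset J).2
    fun p hp => (hsmall _ (half_pos (hs p (hJM p hp)))).and (hpush p (hJM p hp)))).and
    eventually_mem_nhdsWithin).exists
  have hδ : ∀ᶠ δ in 𝓝[>] 0, ∀ p ∈ J, IsPushable τ P.Ω (ball p (s p)) t δ := by
    refine (eventually_all_finset J).2 fun p hp => ?_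
    obtain ⟨-, δ, hδ, hδp⟩ := htJ p hp
    filter_upwards [Ioo_mem_nhdsGT hδ] with x hx using hδp.mono_right hx.2.le
  obtain ⟨δ, hδJ, hδ : 0 < δ⟩ := (hδ.and eventually_mem_nhdsWithin).exists
  refine ⟨δ / 2, half_pos hδ, ⋃ p ∈ J, ball p (s p / 2), isOpen_biUnion fun _ _ => isOpen_ball,
    hMJ, fun g hg ε hε => ?_⟩
  obtain ⟨g', hg', h⟩ := hg.exists_push_finset hτ ht hδJ (lt_min hε (half_pos hδ))
  refine ⟨g', hg', fun ζ hζ => ⟨(h ζ hζ).1.trans htd.le,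
    by linarith [(h ζ hζ).2.1, min_le_left ε (δ / 2)], fun hW => ?_⟩⟩
  obtain ⟨p, hpJ, hp⟩ := Set.mem_iUnion₂.1 hW
  have hsub : closedBall (g ζ) (J.card * (2 * t)) ⊆ ball p (s p) :=
    closedBall_subset_ball' (by linarith [(htJ p hpJ).1, mem_ball.1 hp])
  linarith [(h ζ hζ).2.2 p hpJ hsub, min_le_right ε (δ / 2)]

theorem exists_push_step (P : DiscProblem E) (D : E) (hτ : ContinuousOn τ P.Ω) {c₀ c₁ : ℝ}
    (hM : IsCompact {z ∈ P.Ω | c₀ ≤ τ z ∧ τ z ≤ c₁})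
    (hpush : ∀ p ∈ P.Ω, c₀ ≤ τ p → τ p ≤ c₁ → IsLocallyPushable τ P.Ω p) :
    ∃ δ > 0, ∀ g, P.Admissible D g → ∀ c ≥ c₀,
      (∀ ζ ∈ sphere (0 : ℂ) 1, c₁ < τ (g ζ) ∨ c ≤ τ (g ζ)) →
      ∃ g', P.Admissible D g' ∧ ∀ ζ ∈ sphere (0 : ℂ) 1, c₁ < τ (g' ζ) ∨ c + δ ≤ τ (g' ζ) := by
  obtain ⟨δ, hδ, W, hW, hMW, hround⟩ := P.exists_push_near D hτ hM
    (fun p hp => hpush p hp.1 hp.2.1 hp.2.2) one_pos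
  refine ⟨δ, hδ, fun g hg c hc h => ?_⟩
  obtain ⟨m, hm, hmτ⟩ := (((isCompact_sphere (0 : ℂ) 1).image_of_continuousOn
    hg.continuousOn_sphere).diff hW).exists_forall_le' (a := c₁)
    (hτ.mono (by rintro _ ⟨⟨ζ, hζ, rfl⟩, -⟩; exact hg.mem_Ω ζ hζ)) (by
      rintro _ ⟨⟨ζ, hζ, rfl⟩, hζW⟩
      by_contra! hle
      exact hζW (hMW ⟨hg.mem_Ω ζ hζ, hc.le.trans ((h ζ hζ).resolve_left hle.not_gt), hle⟩))
  obtain ⟨g', hg', h'⟩ := hround g hg ((m - c₁) / 2) (by linarith)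
  refine ⟨g', hg', fun ζ hζ => ?_⟩
  by_cases hζW : g ζ ∈ W
  · exact (h ζ hζ).imp (fun _ => by linarith [(h' ζ hζ).2.2 hζW])
      fun _ => by linarith [(h' ζ hζ).2.2 hζW]
  · exact .inl (by linarith [hmτ _ ⟨⟨ζ, hζ, rfl⟩, hζW⟩, (h' ζ hζ).2.1])

theorem Admissible.exists_push_level (hg : P.Admissible D g) (hτ : ContinuousOn τ P.Ω)
    {c₀ c₁ : ℝ} (hM : IsCompact {z ∈ P.Ω | c₀ ≤ τ z ∧ τ z ≤ c₁})
    (hpush : ∀ p ∈ P.Ω, c₀ ≤ τ p → τ p ≤ c₁ → IsLocallyPushable τ P.Ω p)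
    (hbd : ∀ ζ ∈ sphere (0 : ℂ) 1, c₀ ≤ τ (g ζ)) :
    ∃ g', P.Admissible D g' ∧ ∀ ζ ∈ sphere (0 : ℂ) 1, c₁ < τ (g' ζ) := by
  obtain ⟨δ, hδ, hstep⟩ := P.exists_push_step D hτ hM hpush
  have hiter (k : ℕ) : ∃ g', P.Admissible D g' ∧
      ∀ ζ ∈ sphere (0 : ℂ) 1, c₁ < τ (g' ζ) ∨ c₀ + k * δ ≤ τ (g' ζ) := by
    induction k with
    | zero => exact ⟨g, hg, fun ζ hζ => .inr (by simpa using hbd ζ hζ)⟩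
    | succ k ih =>
      obtain ⟨g₁, hg₁, h₁⟩ := ih
      obtain ⟨g₂, hg₂, h₂⟩ := hstep g₁ hg₁ _ (le_add_of_nonneg_right (by positivity)) h₁
      exact ⟨g₂, hg₂, fun ζ hζ => (h₂ ζ hζ).imp_right fun h => by push_cast; linarith⟩
  obtain ⟨k, hk⟩ := exists_nat_gt ((c₁ - c₀) / δ)
  obtain ⟨g', hg', h⟩ := hiter k
  rw [div_lt_iff₀ hδ] at hk
  exact ⟨g', hg', fun ζ hζ => (h ζ hζ).elim id fun h => by linarith⟩

end DiscProblem

end Levels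

section SmoothedDist

variable {E F : Type*} [NormedAddCommGroup E] [NormedSpace ℝ E] [NormedAddCommGroup F]
  [InnerProductSpace ℝ F] (l : E →L[ℝ] F) (q : E) {μ : ℝ}

/-- A smooth convex approximation, as `μ → 0`, of `z ↦ ‖l (z - q)‖`, the distance to the affine
subspace `l (z - q) = 0` measured through `l`; it is normalized to vanish on that subspace. -/
noncomputable def smoothedDist (μ : ℝ) (z : E) : ℝ :=
  √(‖l (z - q)‖ ^ 2 + μ ^ 2) - μ

/-- The derivative of `smoothedDist l q μ`. -/
noncomputable def smoothedDistDeriv (μ : ℝ) (z : E) : E →L[ℝ] ℝ :=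
  (√(‖l (z - q)‖ ^ 2 + μ ^ 2))⁻¹ • (innerSL ℝ (l (z - q))).comp l

theorem continuous_smoothedDist : Continuous (smoothedDist l q μ) := by
  unfold smoothedDist
  fun_prop

theorem smoothedDist_nonneg (z : E) : 0 ≤ smoothedDist l q μ z :=
  sub_nonneg.2 (Real.le_sqrt_of_sq_le (le_add_of_nonneg_left (sq_nonneg _)))

theorem smoothedDist_self (hμ : 0 ≤ μ) : smoothedDist l q μ q = 0 := by
  simp [smoothedDist, Real.sqrt_sq hμ]

theorem norm_sub_le_smoothedDist (z : E) : ‖l (z - q)‖ - μ ≤ smoothedDist l q μ z :=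
  sub_le_sub_right (Real.le_sqrt_of_sq_le (le_add_of_nonneg_right (sq_nonneg μ))) μ

theorem smoothedDist_le (hμ : 0 ≤ μ) (z : E) : smoothedDist l q μ z ≤ ‖l (z - q)‖ :=
  sub_le_iff_le_add.2 (Real.sqrt_le_iff.2
    ⟨by positivity, by nlinarith [mul_nonneg (norm_nonneg (l (z - q))) hμ]⟩)

theorem sqrt_norm_sq_add_sq_pos (hμ : 0 < μ) (z : E) : 0 < √(‖l (z - q)‖ ^ 2 + μ ^ 2) :=
  Real.sqrt_pos.2 (by positivity)

theorem continuous_smoothedDistDeriv (hμ : 0 < μ) : Continuous (smoothedDistDeriv l q μ) := by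
  have hc : Continuous fun z => l (z - q) := by fun_prop
  exact (((hc.norm.pow 2).add continuous_const).sqrt.inv₀
    fun z => (sqrt_norm_sq_add_sq_pos l q hμ z).ne').smul
    (((innerSL ℝ).continuous.comp hc).clm_comp continuous_const)

theorem norm_smoothedDistDeriv_le (hμ : 0 < μ) (z : E) : ‖smoothedDistDeriv l q μ z‖ ≤ ‖l‖ := by
  have hpos := sqrt_norm_sq_add_sq_pos l q hμ z
  rw [smoothedDistDeriv, norm_smul, norm_inv, Real.norm_of_nonneg hpos.le, inv_mul_le_iff₀ hpos]
  calc ‖(innerSL ℝ (l (z - q))).comp l‖ ≤ ‖innerSL ℝ (l (z - q))‖ * ‖l‖ :=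
        ContinuousLinearMap.opNorm_comp_le _ _
    _ ≤ √(‖l (z - q)‖ ^ 2 + μ ^ 2) * ‖l‖ := by
        rw [innerSL_apply_norm]
        gcongr
        exact Real.le_sqrt_of_sq_le (le_add_of_nonneg_right (sq_nonneg μ))

-- The Cauchy–Schwarz inequality for `(l (z - q), μ)` and `(l (z + v - q), μ)`.
theorem smoothedDist_add_le (hμ : 0 < μ) (z v : E) :
    smoothedDist l q μ z + smoothedDistDeriv l q μ z v ≤ smoothedDist l q μ (z + v) := by
  have hpos := sqrt_norm_sq_add_sq_pos l q hμ z
  have hcs := real_inner_le_norm (WithLp.toLp 2 (l (z - q), μ)) (WithLp.toLp 2 (l (z + v - q), μ))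
  rw [WithLp.prod_inner_apply, WithLp.prod_norm_eq_of_L2, WithLp.prod_norm_eq_of_L2] at hcs
  simp only [Real.norm_eq_abs, sq_abs, add_sub_right_comm z v q, map_add, inner_add_right,
    real_inner_self_eq_norm_sq] at hcs
  rw [smoothedDist, smoothedDist, smoothedDistDeriv, add_sub_right_comm z v q, map_add,
    sub_add_eq_add_sub, sub_le_sub_iff_right, smul_apply, ContinuousLinearMap.comp_apply,
    innerSL_apply_apply, smul_eq_mul, ← mul_le_mul_iff_right₀ hpos, mul_add,
    mul_inv_cancel_left₀ hpos.ne', Real.mul_self_sqrt (by positivity)]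
  exact (add_right_comm _ _ _).trans_le hcs

end SmoothedDist

section CriticalPoint

variable {E : Type*} [NormedAddCommGroup E] [NormedSpace ℝ E] {ρ : E → ℝ} {Ω : Set E} {q : E}

theorem isLittleO_fderiv_of_fderiv_eq_zero (hΩ : IsOpen Ω) (hρ : ContDiffOn ℝ 2 ρ Ω) (hq : q ∈ Ω)
    (hcrit : fderiv ℝ ρ q = 0) :
    (fun z => fderiv ℝ ρ z - fderiv ℝ (fderiv ℝ ρ) q (z - q)) =o[𝓝 q] fun z => z - q := by
  simpa only [hcrit, sub_zero] using (((hρ.fderiv_of_isOpen hΩ (m := 1) (by norm_num)).contDiffAt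
    (hΩ.mem_nhds hq)).differentiableAt (by norm_num)).hasFDerivAt.isLittleO

theorem exists_forall_abs_sub_le_of_fderiv_eq_zero (hΩ : IsOpen Ω) (hρ : ContDiffOn ℝ 2 ρ Ω)
    (hq : q ∈ Ω) (hcrit : fderiv ℝ ρ q = 0) :
    ∃ R₀ > 0, ball q R₀ ⊆ Ω ∧ ∃ C, ∀ R ≤ R₀, ∀ z ∈ ball q R, ∀ z' ∈ ball q R,
      |ρ z' - ρ z| ≤ C * R * dist z' z := by
  set B := fderiv ℝ (fderiv ℝ ρ) q
  obtain ⟨R₀, hR₀, h⟩ := Metric.eventually_nhds_iff_ball.1 (((isLittleO_fderiv_of_fderiv_eq_zero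
    hΩ hρ hq hcrit).def one_pos).and (hΩ.mem_nhds hq))
  refine ⟨R₀, hR₀, fun z hz => (h z hz).2, ‖B‖ + 1, fun R hR z hz z' hz' => ?_⟩
  have hsub : ball q R ⊆ ball q R₀ := ball_subset_ball hR
  rw [dist_eq_norm, ← Real.norm_eq_abs]
  refine (convex_ball q R).norm_image_sub_le_of_norm_fderiv_le (𝕜 := ℝ)
    (fun x hx => (hρ.differentiableOn (by norm_num)).differentiableAt
      (hΩ.mem_nhds (h x (hsub hx)).2)) (fun x hx => ?_) hz hz'
  calc ‖fderiv ℝ ρ x‖ ≤ ‖fderiv ℝ ρ x - B (x - q)‖ + ‖B (x - q)‖ := norm_le_norm_sub_add _ _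
    _ ≤ 1 * ‖x - q‖ + ‖B‖ * ‖x - q‖ := add_le_add (h x (hsub hx)).1 (B.le_opNorm _)
    _ = (‖B‖ + 1) * ‖x - q‖ := by ring
    _ ≤ (‖B‖ + 1) * R := by gcongr; exact (mem_ball_iff_norm.1 hx).le

theorem eventually_fderiv_add_ne_zero (hΩ : IsOpen Ω) (hρ : ContDiffOn ℝ 2 ρ Ω) (hq : q ∈ Ω)
    (hcrit : fderiv ℝ ρ q = 0) {c : ℝ} (hc : 0 < c) :
    ∀ᶠ z in 𝓝[≠] q, ∀ Q : E →L[ℝ] ℝ,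
      c * ‖z - q‖ ≤ ‖fderiv ℝ (fderiv ℝ ρ) q (z - q) + Q‖ → fderiv ℝ ρ z + Q ≠ 0 := by
  filter_upwards [nhdsWithin_le_nhds ((isLittleO_fderiv_of_fderiv_eq_zero hΩ hρ hq hcrit).def
    (half_pos hc)), self_mem_nhdsWithin] with z hz hzq Q hQ h0
  have hpos : 0 < ‖z - q‖ := norm_pos_iff.2 (sub_ne_zero.2 hzq)
  rw [eq_neg_of_add_eq_zero_right h0, ← sub_eq_add_neg,
    norm_sub_rev (fderiv ℝ (fderiv ℝ ρ) q (z - q))] at hQ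
  nlinarith

end CriticalPoint

section LeviLayer

variable {E : Type*} [NormedAddCommGroup E] [NormedSpace ℂ E] [NormedSpace ℝ E]

/-- `ρ` is of class `C²` on `Ω`, its Levi form has at least two positive eigenvalues everywhere on
`Ω`, and the layer between the levels `a` and `b` of `ρ` is compact. -/
structure LeviLayer (ρ : E → ℝ) (Ω : Set E) (a b : ℝ) : Prop where
  contDiffOn : ContDiffOn ℝ 2 ρ Ω
  hasPosLeviPlane : ∀ z ∈ Ω, HasPosLeviPlane (fderiv ℝ (fderiv ℝ ρ) z)
  isCompact : IsCompact {z ∈ Ω | a ≤ ρ z ∧ ρ z ≤ b}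

variable [IsScalarTower ℝ ℂ E] [FiniteDimensional ℂ E] {P : DiscProblem E} {D : E} {g : ℂ → E}
  {ρ : E → ℝ} {a b c₀ c₁ : ℝ}

namespace DiscProblem

theorem Admissible.exists_push_level_add_convex (hg : P.Admissible D g) (hρ : LeviLayer ρ P.Ω a b)
    {h : E → ℝ} {L : E → E →L[ℝ] ℝ} (hh : Continuous h) (hL : Continuous L)
    (hconv : ∀ z v, h z + L z v ≤ h (z + v))
    (hsub : ∀ z ∈ P.Ω, c₀ ≤ ρ z + h z → ρ z + h z ≤ c₁ →
      (a ≤ ρ z ∧ ρ z ≤ b) ∧ fderiv ℝ ρ z + L z ≠ 0)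
    (hbd : ∀ ζ ∈ sphere (0 : ℂ) 1, c₀ ≤ ρ (g ζ) + h (g ζ)) :
    ∃ g', P.Admissible D g' ∧ ∀ ζ ∈ sphere (0 : ℂ) 1, c₁ < ρ (g' ζ) + h (g' ζ) := by
  have hτ : ContinuousOn (fun z => ρ z + h z) P.Ω := hρ.contDiffOn.continuousOn.add hh.continuousOn
  have hcl := (hτ.mono (Set.sep_subset _ _)).preimage_isClosed_of_isClosed hρ.isCompact.isClosed
    (isClosed_Icc (a := c₀) (b := c₁))
  have heq : {z ∈ P.Ω | a ≤ ρ z ∧ ρ z ≤ b} ∩ (fun z => ρ z + h z) ⁻¹' Set.Icc c₀ c₁ =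
      {z ∈ P.Ω | c₀ ≤ ρ z + h z ∧ ρ z + h z ≤ c₁} :=
    Set.ext fun z => ⟨fun hz => ⟨hz.1.1, hz.2⟩,
      fun hz => ⟨⟨hz.1, (hsub z hz.1 hz.2.1 hz.2.2).1⟩, hz.2⟩⟩
  exact hg.exists_push_level hτ
    (heq ▸ hρ.isCompact.of_isClosed_subset hcl Set.inter_subset_left)
    (fun p hp h₀ h₁ => isLocallyPushable_add_convex P.isOpen_Ω hρ.contDiffOn hp
      (hρ.hasPosLeviPlane p hp) hL hconv (hsub p hp h₀ h₁).2) hbd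

theorem Admissible.exists_push_level_of_fderiv_ne_zero (hg : P.Admissible D g)
    (hρ : LeviLayer ρ P.Ω a b) (ha : a ≤ c₀) (hb : c₁ ≤ b)
    (hne : ∀ z ∈ P.Ω, c₀ ≤ ρ z → ρ z ≤ c₁ → fderiv ℝ ρ z ≠ 0)
    (hbd : ∀ ζ ∈ sphere (0 : ℂ) 1, c₀ ≤ ρ (g ζ)) :
    ∃ g', P.Admissible D g' ∧ ∀ ζ ∈ sphere (0 : ℂ) 1, c₁ < ρ (g' ζ) := by
  simpa using hg.exists_push_level_add_convex hρ (h := 0) (L := 0) (c₀ := c₀) (c₁ := c₁)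
    continuous_const continuous_const (by simp)
    (fun z hz h₀ h₁ => by
      rw [Pi.zero_apply, add_zero] at h₀ h₁ ⊢
      exact ⟨⟨ha.trans h₀, h₁.trans hb⟩, hne z hz h₀ h₁⟩) (by simpa using hbd)

end DiscProblem

end LeviLayer

section Crossing

open ComplexConjugate

/-- The coefficient of the linear term of a quadratic disc whose boundary, in the coordinate
`x : ℂ`, stays outside the disc of radius `κ`. -/
noncomputable def crossing₁ (κ : ℝ) (x : ℂ) : ℂ :=
  √(κ * max 0 (κ - ‖x‖)) * (Complex.I * (x / ‖x‖))

/-- The coefficient of the quadratic term of a quadratic disc whose boundary, in the coordinate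
`x : ℂ`, stays outside the disc of radius `κ`. -/
noncomputable def crossing₂ (κ : ℝ) (x : ℂ) : ℂ :=
  -((max 0 (κ - ‖x‖) / 2 : ℝ) * (x / ‖x‖))

theorem norm_div_norm_le_one (x : ℂ) : ‖x / (‖x‖ : ℂ)‖ ≤ 1 := by
  simpa using div_self_le_one ‖x‖

theorem norm_crossing_add_le {κ : ℝ} (hκ : 0 ≤ κ) (x : ℂ) :
    ‖crossing₁ κ x‖ + ‖crossing₂ κ x‖ ≤ 3 / 2 * κ := by
  have hA : max 0 (κ - ‖x‖) ≤ κ := max_le hκ (sub_le_self κ (norm_nonneg x))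
  have hsqrt : √(κ * max 0 (κ - ‖x‖)) ≤ κ := Real.sqrt_le_iff.2 ⟨hκ, by nlinarith⟩
  have h₁ : ‖crossing₁ κ x‖ ≤ √(κ * max 0 (κ - ‖x‖)) := by
    rw [crossing₁, norm_mul, norm_mul, Complex.norm_I, one_mul,
      Complex.norm_of_nonneg (Real.sqrt_nonneg _)]
    exact mul_le_of_le_one_right (Real.sqrt_nonneg _) (norm_div_norm_le_one x)
  have h₂ : ‖crossing₂ κ x‖ ≤ max 0 (κ - ‖x‖) / 2 := by
    rw [crossing₂, norm_neg, norm_mul, Complex.norm_of_nonneg (by positivity)]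
    exact mul_le_of_le_one_right (by positivity) (norm_div_norm_le_one x)
  linarith

theorem continuousOn_crossing {Y : Type*} [TopologicalSpace Y] {s : Set Y} {κ : Y → ℝ}
    {x : Y → ℂ} (hκ : ContinuousOn κ s) (hx : ContinuousOn x s) (hne : ∀ y ∈ s, x y ≠ 0) :
    ContinuousOn (fun y => crossing₁ (κ y) (x y)) s ∧
      ContinuousOn (fun y => crossing₂ (κ y) (x y)) s := by
  have hu : ContinuousOn (fun y => x y / (‖x y‖ : ℂ)) s :=
    hx.div (Complex.continuous_ofReal.comp_continuousOn hx.norm)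
      fun y hy => by simpa using hne y hy
  have hA : ContinuousOn (fun y => max 0 (κ y - ‖x y‖)) s :=
    continuousOn_const.sup (hκ.sub hx.norm)
  exact ⟨(Complex.continuous_ofReal.comp_continuousOn (hκ.mul hA).sqrt).mul
      (continuousOn_const.mul hu),
    ((Complex.continuous_ofReal.comp_continuousOn (hA.div_const 2)).mul hu).neg⟩

theorem le_norm_add_crossing {κ : ℝ} (hκ : 0 ≤ κ) {x η : ℂ} (hx : x ≠ 0) (hη : ‖η‖ = 1) :
    κ ≤ ‖x + 2 * η.re * crossing₁ κ x + 2 * (η ^ 2).re * crossing₂ κ x‖ := by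
  rw [crossing₁, crossing₂]
  set t := ‖x‖
  set A := max 0 (κ - t)
  have ht : (t : ℂ) ≠ 0 := by simpa [t] using hx
  have hfactor : x + 2 * η.re * (√(κ * A) * (Complex.I * (x / t))) +
      2 * (η ^ 2).re * -((A / 2 : ℝ) * (x / t)) =
      (x / t) * ((t - A * (η ^ 2).re : ℝ) + (2 * √(κ * A) * η.re : ℝ) * Complex.I) := by
    push_cast
    field_simp
    ring
  have hre : (η ^ 2).re = 2 * η.re ^ 2 - 1 := by
    have him := Complex.sq_norm_sub_sq_re η
    rw [pow_two, Complex.mul_re]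
    rw [hη] at him
    linarith
  have hs : √(κ * A) ^ 2 = κ * A := Real.sq_sqrt (by positivity)
  rw [hfactor, norm_mul, norm_div, Complex.norm_real, norm_norm, div_self (norm_ne_zero_iff.2 hx),
    one_mul, Complex.norm_add_mul_I]
  refine Real.le_sqrt_of_sq_le ?_
  rw [hre, mul_pow, mul_pow, hs]
  rcases le_total t κ with h | h
  · have hA : A = κ - t := max_eq_right (by linarith)
    rw [show t = κ - A by linarith]
    nlinarith [sq_nonneg (A * η.re ^ 2)]
  · have hA : A = 0 := max_eq_left (by linarith)
    rw [hA]
    nlinarith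

variable {E : Type*} [NormedAddCommGroup E] [NormedSpace ℂ E]

theorem norm_smul_add_conj_smul_le (w : ℂ) (e₁ e₂ : E) :
    ‖w • e₁ + conj w • e₂‖ ≤ ‖w‖ * (‖e₁‖ + ‖e₂‖) := by
  simpa only [norm_smul, RCLike.norm_conj, mul_add] using norm_add_le (w • e₁) (conj w • e₂)

variable [NormedSpace ℝ E] {l : E →L[ℝ] ℂ} {e₁ e₂ : E}

theorem apply_smul_smul_add_conj_smul (h₁ : ∀ η : ℂ, l (η • e₁) = η)
    (h₂ : ∀ η : ℂ, l (η • e₂) = conj η) (η w : ℂ) :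
    l (η • (w • e₁ + conj w • e₂)) = 2 * η.re * w := by
  rw [smul_add, smul_smul, smul_smul, map_add, h₁, h₂, map_mul, Complex.conj_conj, ← add_mul,
    Complex.add_conj, Complex.ofReal_mul, Complex.ofReal_ofNat]

namespace DiscProblem

variable [FiniteDimensional ℂ E] {P : DiscProblem E} {D : E} {g : ℂ → E}

theorem Admissible.exists_push_off (hg : P.Admissible D g) {τ : E → ℝ} (hτ : ContinuousOn τ P.Ω)
    (h₁ : ∀ η : ℂ, l (η • e₁) = η) (h₂ : ∀ η : ℂ, l (η • e₂) = conj η) {q : E}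
    (hne : ∀ ζ ∈ sphere (0 : ℂ) 1, l (g ζ - q) ≠ 0) {κ : E → ℝ} (hκ : Continuous κ)
    (hκ₀ : ∀ z, 0 ≤ κ z)
    (hκΩ : ∀ z ∈ P.Ω, closedBall z (3 / 2 * κ z * (‖e₁‖ + ‖e₂‖)) ⊆ P.Ω) {ε : ℝ} (hε : 0 < ε) :
    ∃ g', P.Admissible D g' ∧ ∀ ζ ∈ sphere (0 : ℂ) 1, ∃ z,
      dist z (g ζ) ≤ 3 / 2 * κ (g ζ) * (‖e₁‖ + ‖e₂‖) ∧ κ (g ζ) ≤ ‖l (z - q)‖ ∧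
      τ z - ε < τ (g' ζ) := by
  set w₁ : ℂ → ℂ := fun ζ => crossing₁ (κ (g ζ)) (l (g ζ - q))
  set w₂ : ℂ → ℂ := fun ζ => crossing₂ (κ (g ζ)) (l (g ζ - q))
  obtain ⟨hw₁, hw₂⟩ : ContinuousOn w₁ (sphere 0 1) ∧ ContinuousOn w₂ (sphere 0 1) :=
    continuousOn_crossing (hκ.comp_continuousOn hg.continuousOn_sphere)
      (l.continuous.comp_continuousOn (hg.continuousOn_sphere.sub continuousOn_const)) hne
  have hcont {w : ℂ → ℂ} (hw : ContinuousOn w (sphere 0 1)) :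
      ContinuousOn (fun ζ => w ζ • e₁ + conj (w ζ) • e₂) (sphere 0 1) :=
    (hw.smul continuousOn_const).add
      ((Complex.continuous_conj.comp_continuousOn hw).smul continuousOn_const)
  have hsize (ζ : ℂ) : ‖w₁ ζ • e₁ + conj (w₁ ζ) • e₂‖ + ‖w₂ ζ • e₁ + conj (w₂ ζ) • e₂‖ ≤
      3 / 2 * κ (g ζ) * (‖e₁‖ + ‖e₂‖) :=
    calc _ ≤ (‖w₁ ζ‖ + ‖w₂ ζ‖) * (‖e₁‖ + ‖e₂‖) := by
          rw [add_mul]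
          exact add_le_add (norm_smul_add_conj_smul_le _ _ _) (norm_smul_add_conj_smul_le _ _ _)
      _ ≤ _ := mul_le_mul_of_nonneg_right (norm_crossing_add_le (hκ₀ _) _) (by positivity)
  obtain ⟨g', hg', h⟩ := hg.exists_attach_sub_lt hτ (hcont hw₁) (hcont hw₂) (fun ζ hζ =>
    (closedBall_subset_closedBall (hsize ζ)).trans (hκΩ _ (hg.mem_Ω ζ hζ))) hε
  refine ⟨g', hg', fun ζ hζ => ?_⟩
  obtain ⟨η, hη, -, hlt⟩ := h ζ hζ
  refine ⟨_, (dist_quadDisc_le _ _ _ hη).trans (hsize ζ), ?_, hlt⟩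
  rw [quadDisc, add_sub_right_comm, add_sub_right_comm, map_add, map_add,
    apply_smul_smul_add_conj_smul h₁ h₂, apply_smul_smul_add_conj_smul h₁ h₂]
  exact le_norm_add_crossing (hκ₀ _) (hne ζ hζ) hη

theorem Admissible.exists_push_off_ball (hg : P.Admissible D g) {τ : E → ℝ}
    (hτ : ContinuousOn τ P.Ω) (h₁ : ∀ η : ℂ, l (η • e₁) = η) (h₂ : ∀ η : ℂ, l (η • e₂) = conj η)
    {q : E}
    (hne : ∀ ζ ∈ sphere (0 : ℂ) 1, l (g ζ - q) ≠ 0) {R ν : ℝ} (hR : 0 < R)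
    (hΩ : ball q (3 * R) ⊆ P.Ω) (hν : 0 ≤ ν) (hνR : ν * (3 / 2 * (‖e₁‖ + ‖e₂‖)) < R) {ε : ℝ}
    (hε : 0 < ε) :
    ∃ g', P.Admissible D g' ∧ ∀ ζ ∈ sphere (0 : ℂ) 1, ∃ z, τ z - ε < τ (g' ζ) ∧
      (z = g ζ ∨ g ζ ∈ ball q (3 * R) ∧ z ∈ ball q (3 * R) ∧
        dist z (g ζ) ≤ ν * (3 / 2 * (‖e₁‖ + ‖e₂‖))) ∧
      (g ζ ∈ ball q R → ν ≤ ‖l (z - q)‖) := by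
  obtain ⟨χ, hχ, hχI, hχ₁, hχsupp⟩ := exists_cutoff q hR
  have hχ₀ {z : E} (hz : z ∉ closedBall q (2 * R)) : χ z = 0 :=
    image_eq_zero_of_notMem_tsupport fun h => hz (hχsupp h)
  have hsize (z : E) : 3 / 2 * (ν * χ z) * (‖e₁‖ + ‖e₂‖) ≤ ν * (3 / 2 * (‖e₁‖ + ‖e₂‖)) := by
    have := mul_le_of_le_one_right (show 0 ≤ ν * (3 / 2 * (‖e₁‖ + ‖e₂‖)) by positivity) (hχI z).2
    linarith
  have hball {z w : E} (hz : z ∈ closedBall q (2 * R))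
      (hw : dist w z ≤ ν * (3 / 2 * (‖e₁‖ + ‖e₂‖))) : w ∈ ball q (3 * R) :=
    mem_ball.2 (by linarith [dist_triangle w z q, mem_closedBall.1 hz])
  have hdist {z w : E} (hw : dist w z ≤ 3 / 2 * (ν * χ z) * (‖e₁‖ + ‖e₂‖)) :
      w = z ∨ z ∈ ball q (3 * R) ∧ w ∈ ball q (3 * R) ∧
        dist w z ≤ ν * (3 / 2 * (‖e₁‖ + ‖e₂‖)) := by
    by_cases hz : z ∈ closedBall q (2 * R)
    · exact .inr ⟨closedBall_subset_ball (by linarith) hz, hball hz (hw.trans (hsize z)),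
        hw.trans (hsize z)⟩
    · exact .inl (dist_le_zero.1 (by simpa [hχ₀ hz] using hw))
  obtain ⟨g', hg', h⟩ := hg.exists_push_off hτ h₁ h₂ hne (continuous_const.mul hχ)
    (fun z => mul_nonneg hν (hχI z).1) (fun z hz w hw => (hdist (mem_closedBall.1 hw)).elim
      (fun h => h ▸ hz) fun h => hΩ h.2.1) hε
  refine ⟨g', hg', fun ζ hζ => ?_⟩
  obtain ⟨z, hz, hκ, hlt⟩ := h ζ hζ
  exact ⟨z, hlt, hdist hz, fun hR => by simpa [hχ₁ _ hR] using hκ⟩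

end DiscProblem

end Crossing

section Perturbation

theorem exists_norm_lt_forall_add_mul_sq_ne_zero {φ : ℂ → ℂ}
    (hφ : ContDiff ℝ 1 fun θ => φ (circleMap 0 1 θ)) {δ : ℝ} (hδ : 0 < δ) :
    ∃ c : ℂ, ‖c‖ < δ ∧ ∀ ζ ∈ sphere (0 : ℂ) 1, φ ζ + c * ζ ^ 2 ≠ 0 := by
  have hsmooth : ContDiff ℝ 1 fun θ => -(φ (circleMap 0 1 θ) * (circleMap 0 1 θ ^ 2)⁻¹) :=
    (hφ.mul (((contDiff_circleMap 0 1).pow 2).inv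
      fun θ => pow_ne_zero 2 (circleMap_ne_center one_ne_zero))).neg
  obtain ⟨c, hc, hcδ⟩ :=
    (hsmooth.dense_compl_range_of_finrank_lt_finrank (by simp)).exists_dist_lt 0 hδ
  refine ⟨c, by rwa [dist_zero_left] at hcδ, fun ζ hζ h0 => ?_⟩
  obtain ⟨θ, rfl⟩ : ζ ∈ Set.range (circleMap 0 1) := by simpa using hζ
  refine hc ⟨θ, ?_⟩
  beta_reduce
  rw [eq_neg_of_add_eq_zero_left h0, neg_mul, neg_neg,
    mul_inv_cancel_right₀ (pow_ne_zero 2 (circleMap_ne_center one_ne_zero))]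

namespace DiscProblem

variable {E : Type*} [NormedAddCommGroup E] [NormedSpace ℂ E] [FiniteDimensional ℂ E]
  {P : DiscProblem E} {D : E} {g : ℂ → E}

theorem Admissible.exists_forall_add_mul_sq_smul (hg : P.Admissible D g) (e : E) {d : ℝ}
    (hd : 0 < d) :
    ∃ δ > 0, ∀ c : ℂ, ‖c‖ < δ → P.Admissible D (fun ζ => g ζ + (c * ζ ^ 2) • e) ∧
      ∀ ζ ∈ sphere (0 : ℂ) 1, dist (g ζ + (c * ζ ^ 2) • e) (g ζ) < d := by
  obtain ⟨δ, hδ, hadd⟩ := hg.exists_forall_add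
  obtain ⟨s, hs, hΩ⟩ := exists_forall_dist_lt_mem_of_isCompact (isCompact_sphere (0 : ℂ) 1)
    hg.continuousOn_sphere P.isOpen_Ω hg.mem_Ω
  obtain ⟨t, ht, ht₀ : 0 < t⟩ := ((eventually_mul_lt ‖e‖ (lt_min hd (lt_min hδ hs))).and
    eventually_mem_nhdsWithin).exists
  simp only [lt_min_iff] at ht
  refine ⟨t, ht₀, fun c hc => ?_⟩
  have hnorm (ζ : ℂ) (hζ : ‖ζ‖ ≤ 1) : ‖(c * ζ ^ 2) • e‖ ≤ t * ‖e‖ := by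
    rw [norm_smul, norm_mul, norm_pow]
    gcongr
    exact (mul_le_of_le_one_right (norm_nonneg c) (pow_le_one₀ (norm_nonneg ζ) hζ)).trans hc.le
  have hdist (ζ : ℂ) (hζ : ζ ∈ sphere (0 : ℂ) 1) :
      dist (g ζ + (c * ζ ^ 2) • e) (g ζ) ≤ t * ‖e‖ := by
    rw [dist_self_add_left]
    exact hnorm ζ (mem_sphere_zero_iff_norm.1 hζ).le
  have hderiv : HasDerivAt (fun ζ : ℂ => (c * ζ ^ 2) • e) 0 0 := by
    simpa using ((hasDerivAt_pow 2 (0 : ℂ)).const_mul c).smul_const e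
  exact ⟨hadd _ (by fun_prop) (by simp) hderiv.deriv
    (fun ζ hζ => .inl ((hnorm ζ (mem_closedBall_zero_iff.1 hζ)).trans_lt ht.2.1))
    fun ζ hζ => hΩ ζ hζ _ ((hdist ζ hζ).trans_lt ht.2.2),
    fun ζ hζ => (hdist ζ hζ).trans_lt ht.1⟩

theorem Admissible.exists_perturb [NormedSpace ℝ E] [IsScalarTower ℝ ℂ E] (hg : P.Admissible D g)
    {l : E →L[ℝ] ℂ} {e : E} (he : ∀ η : ℂ, l (η • e) = η) (q : E) {d : ℝ} (hd : 0 < d) :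
    ∃ g', P.Admissible D g' ∧ ∀ ζ ∈ sphere (0 : ℂ) 1, dist (g' ζ) (g ζ) < d ∧ l (g' ζ - q) ≠ 0 := by
  have : CompleteSpace E := FiniteDimensional.complete ℂ E
  obtain ⟨δ, hδ, hadd⟩ := hg.exists_forall_add_mul_sq_smul e hd
  have hloop : ContDiff ℝ 1 fun θ => g (circleMap 0 1 θ) :=
    contDiff_iff_contDiffAt.2 fun θ => ((hg.analyticOnNhd _ (sphere_subset_closedBall
      (circleMap_mem_sphere 0 zero_le_one θ))).contDiffAt.restrict_scalars ℝ).comp θ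
      (contDiff_circleMap 0 1).contDiffAt
  obtain ⟨c, hc, hne⟩ := exists_norm_lt_forall_add_mul_sq_ne_zero (φ := fun ζ => l (g ζ - q))
    (l.contDiff.comp (hloop.sub contDiff_const)) hδ
  refine ⟨_, (hadd c hc).1, fun ζ hζ => ⟨(hadd c hc).2 ζ hζ, ?_⟩⟩
  rw [add_sub_right_comm, map_add, he]
  exact hne ζ hζ

theorem Admissible.exists_perturb_mem [NormedSpace ℝ E] [IsScalarTower ℝ ℂ E]
    (hg : P.Admissible D g) {l : E →L[ℝ] ℂ} {e : E} (he : ∀ η : ℂ, l (η • e) = η) (q : E)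
    {U : Set E} (hU : IsOpen U)
    (hgU : ∀ ζ ∈ sphere (0 : ℂ) 1, g ζ ∈ U) :
    ∃ g', P.Admissible D g' ∧ ∀ ζ ∈ sphere (0 : ℂ) 1, g' ζ ∈ U ∧ l (g' ζ - q) ≠ 0 := by
  obtain ⟨d, hd, hmem⟩ := exists_forall_dist_lt_mem_of_isCompact (isCompact_sphere (0 : ℂ) 1)
    hg.continuousOn_sphere hU hgU
  obtain ⟨g', hg', h⟩ := hg.exists_perturb he q hd
  exact ⟨g', hg', fun ζ hζ => ⟨hmem ζ hζ _ (h ζ hζ).1, (h ζ hζ).2⟩⟩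

end DiscProblem

end Perturbation

section CriticalLayer

open ComplexConjugate

variable {E : Type*} [NormedAddCommGroup E] [NormedSpace ℂ E] [NormedSpace ℝ E]

/-- A `LeviLayer` whose only critical point is `q`, where the Hessian of `ρ` is non-degenerate and
the value of `ρ` lies strictly between `a` and `b`. -/
structure CriticalLeviLayer (ρ : E → ℝ) (Ω : Set E) (a b : ℝ) (q : E) : Prop
    extends LeviLayer ρ Ω a b where
  mem : q ∈ Ω
  lt_apply : a < ρ q
  apply_lt : ρ q < b
  fderiv_eq_zero : fderiv ℝ ρ q = 0
  nondegenerate : ∀ w, w ≠ 0 → ∃ w', fderiv ℝ (fderiv ℝ ρ) q w w' ≠ 0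
  eq_of_fderiv_eq_zero : ∀ z ∈ Ω, a ≤ ρ z → ρ z ≤ b → fderiv ℝ ρ z = 0 → z = q

variable {ρ : E → ℝ} {Ω : Set E} {a b : ℝ} {q : E} {l : E →L[ℝ] ℂ} {e₁ e₂ : E}

theorem CriticalLeviLayer.fderiv_ne_zero (hρ : CriticalLeviLayer ρ Ω a b q) {z : E} (hz : z ∈ Ω)
    (ha : a ≤ ρ z) (hb : ρ z ≤ b) (hzq : z ≠ q) : fderiv ℝ ρ z ≠ 0 :=
  fun h => hzq (hρ.eq_of_fderiv_eq_zero z hz ha hb h)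

theorem CriticalLeviLayer.eventually_fderiv_add_smoothedDistDeriv_ne_zero
    (hρ : CriticalLeviLayer ρ Ω a b q) (hΩ : IsOpen Ω) {c : ℝ} (hc : 0 < c)
    (hl : ∀ K : ℝ, 0 ≤ K → ∀ z, c * ‖z‖ ≤
      ‖fderiv ℝ (fderiv ℝ ρ) q z + K • (innerSL ℝ (l z)).comp l‖) :
    ∀ᶠ e in 𝓝[>] (0 : ℝ), ∀ μ > 0, ∀ z ∈ Ω, a ≤ ρ z → ρ z ≤ b → z ≠ q →
      fderiv ℝ ρ z + e • smoothedDistDeriv l q μ z ≠ 0 := by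
  obtain ⟨R, hR, hnear⟩ := Metric.eventually_nhds_iff_ball.1 (eventually_nhdsWithin_iff.1
    (eventually_fderiv_add_ne_zero hΩ hρ.contDiffOn hρ.mem hρ.fderiv_eq_zero hc))
  obtain ⟨m, hm, hfar⟩ : ∃ m > 0, ∀ z ∈ {z ∈ Ω | a ≤ ρ z ∧ ρ z ≤ b} \ ball q R,
      m ≤ ‖fderiv ℝ ρ z‖ :=
    (hρ.isCompact.diff isOpen_ball).exists_forall_le'
      ((hρ.contDiffOn.continuousOn_fderiv_of_isOpen hΩ (by norm_num)).mono fun z hz => hz.1.1).norm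
      fun z hz => norm_pos_iff.2 (hρ.fderiv_ne_zero hz.1.1 hz.1.2.1 hz.1.2.2
        fun h => hz.2 (h ▸ mem_ball_self hR))
  filter_upwards [eventually_mul_lt ‖l‖ hm, self_mem_nhdsWithin] with e hem (he : 0 < e)
    μ hμ z hz ha hb hzq
  by_cases hzR : z ∈ ball q R
  · refine hnear z hzR hzq _ ?_
    rw [smoothedDistDeriv, smul_smul]
    exact hl _ (by positivity) _
  · intro h0
    have hle := hfar z ⟨⟨hz, ha, hb⟩, hzR⟩
    rw [eq_neg_of_add_eq_zero_left h0, norm_neg, norm_smul, Real.norm_of_nonneg he.le] at hle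
    exact (hle.trans (mul_le_mul_of_nonneg_left (norm_smoothedDistDeriv_le l q hμ z)
      he.le)).not_gt hem

variable [IsScalarTower ℝ ℂ E] [FiniteDimensional ℂ E]

theorem CriticalLeviLayer.exists_normal_coordinate (hρ : CriticalLeviLayer ρ Ω a b q)
    (hΩ : IsOpen Ω) :
    ∃ (l : E →L[ℝ] ℂ) (e₁ e₂ : E), (∀ η : ℂ, l (η • e₁) = η) ∧ (∀ η : ℂ, l (η • e₂) = conj η) ∧
      ∃ c > 0, ∀ K : ℝ, 0 ≤ K → ∀ z, c * ‖z‖ ≤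
        ‖fderiv ℝ (fderiv ℝ ρ) q z + K • (innerSL ℝ (l z)).comp l‖ := by
  have : FiniteDimensional ℝ E := Module.Finite.trans ℂ E
  have hB := (hρ.contDiffOn.contDiffAt (hΩ.mem_nhds hρ.mem)).isSymmSndFDerivAt (by simp)
  obtain ⟨p₁, p₂, e₁, e₂, hp₁, hp₂, hp₁₂, he₁, he₂⟩ :=
    exists_orthogonal_pair hB hρ.nondegenerate (hρ.hasPosLeviPlane q hρ.mem)
  refine ⟨_, e₁, e₂, he₁, he₂, ?_⟩
  simpa only [innerSL_comp_complexPair] using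
    exists_mul_norm_le_norm_add_smul_squares hB hρ.nondegenerate hp₁ hp₂ hp₁₂

namespace DiscProblem

variable {P : DiscProblem E} {D : E} {g : ℂ → E}

theorem exists_push_near_critical (P : DiscProblem E) (D : E)
    (hρ : CriticalLeviLayer ρ P.Ω a b q) {R : ℝ} (hR : 0 < R) :
    ∃ δ > 0, ∀ σ > 0, σ ≤ ρ q - a → ∀ g, P.Admissible D g →
      (∀ ζ ∈ sphere (0 : ℂ) 1, a ≤ ρ (g ζ)) → ∃ g', P.Admissible D g' ∧
        ∀ ζ ∈ sphere (0 : ℂ) 1,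
          (g' ζ ∈ ball q R ∧ ρ q - 2 * σ < ρ (g' ζ)) ∨ ρ q + δ - 2 * σ < ρ (g' ζ) := by
  have hqb := hρ.apply_lt
  obtain ⟨δ, hδ, W, -, hMW, hpush⟩ := P.exists_push_near D hρ.contDiffOn.continuousOn
    (hρ.isCompact.diff (isOpen_ball (x := q) (ε := R / 2)))
    (fun p hp => by
      have hne := hρ.fderiv_ne_zero hp.1.1 hp.1.2.1 hp.1.2.2 fun h =>
        hp.2 (h ▸ mem_ball_self (half_pos hR))
      simpa using isLocallyPushable_add_convex (h := 0) (L := 0) P.isOpen_Ω hρ.contDiffOn hp.1.1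
        (hρ.hasPosLeviPlane p hp.1.1) continuous_const (by simp) (by simpa using hne))
    (half_pos hR)
  refine ⟨min δ (b - ρ q), lt_min hδ (sub_pos.2 hqb), fun σ hσ hσa g hg hbd => ?_⟩
  obtain ⟨g₁, hg₁, hbd₁⟩ := hg.exists_push_level_of_fderiv_ne_zero hρ.toLeviLayer le_rfl
    (c₁ := ρ q - σ) (by linarith) (fun z hz h₀ h₁ => hρ.fderiv_ne_zero hz h₀ (by linarith)
      (by rintro rfl; linarith)) hbd
  obtain ⟨g₂, hg₂, hbd₂⟩ := hpush g₁ hg₁ σ hσ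
  refine ⟨g₂, hg₂, fun ζ hζ => ?_⟩
  have hlt := hbd₁ ζ hζ
  obtain ⟨hdist, hle, hgain⟩ := hbd₂ ζ hζ
  by_cases hball : g₁ ζ ∈ ball q (R / 2)
  · exact .inl ⟨mem_ball.2 (by linarith [dist_triangle (g₂ ζ) (g₁ ζ) q, mem_ball.1 hball]),
      by linarith⟩
  · refine .inr ?_
    rcases le_or_gt (ρ (g₁ ζ)) b with hb | hb
    · linarith [hgain (hMW ⟨⟨hg₁.mem_Ω ζ hζ, by linarith, hb⟩, hball⟩), min_le_left δ (b - ρ q)]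
    · linarith [min_le_right δ (b - ρ q)]

theorem Admissible.exists_push_above_critical (hg : P.Admissible D g) (hρ : ContinuousOn ρ P.Ω)
    (h₁ : ∀ η : ℂ, l (η • e₁) = η) (h₂ : ∀ η : ℂ, l (η • e₂) = conj η) {ε ν δ R C : ℝ}
    (hε : 0 < ε) (hν : 0 < ν) (hδ : ε * ν ≤ δ) (hR : 0 < R) (hΩ : ball q (3 * R) ⊆ P.Ω)
    (hC : ∀ z ∈ ball q (3 * R), ∀ z' ∈ ball q (3 * R), |ρ z' - ρ z| ≤ C * dist z' z) (hC₀ : 0 ≤ C)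
    (hCε : C * (3 / 2 * (‖e₁‖ + ‖e₂‖)) ≤ ε / 4) (hνR : ν * (3 / 2 * (‖e₁‖ + ‖e₂‖)) < R)
    (hbd : ∀ ζ ∈ sphere (0 : ℂ) 1, (g ζ ∈ ball q R ∧ ρ q - 2 * (ε * ν / 8) < ρ (g ζ)) ∨
      ρ q + δ - 2 * (ε * ν / 8) < ρ (g ζ)) :
    ∃ g', P.Admissible D g' ∧ ∀ ζ ∈ sphere (0 : ℂ) 1,
      ρ q + ε * ν / 8 < ρ (g' ζ) + ε * smoothedDist l q (ν / 4) (g' ζ) := by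
  have hopen (c : ℝ) : IsOpen (P.Ω ∩ ρ ⁻¹' Set.Ioi c) :=
    hρ.isOpen_inter_preimage P.isOpen_Ω isOpen_Ioi
  obtain ⟨g₁, hg₁, hbd₁⟩ := hg.exists_perturb_mem h₁ q
    ((isOpen_ball.inter (hopen _)).union (hopen _)) (fun ζ hζ => (hbd ζ hζ).imp
      (fun h => ⟨h.1, hg.mem_Ω ζ hζ, h.2⟩) fun h => ⟨hg.mem_Ω ζ hζ, h⟩)
  have hσ : 0 < ε * ν / 8 := by positivity
  obtain ⟨g₂, hg₂, hbd₂⟩ := hg₁.exists_push_off_ball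
    (τ := fun z => ρ z + ε * smoothedDist l q (ν / 4) z)
    (hρ.add (continuous_const.mul (continuous_smoothedDist l q)).continuousOn) h₁ h₂
    (fun ζ hζ => (hbd₁ ζ hζ).2) hR hΩ hν.le hνR hσ
  refine ⟨g₂, hg₂, fun ζ hζ => ?_⟩
  obtain ⟨z, hlt, hz, hνz⟩ := hbd₂ ζ hζ
  have hρz : ρ (g₁ ζ) - 2 * (ε * ν / 8) ≤ ρ z := by
    rcases hz with rfl | ⟨hg₁ball, hzball, hdist⟩
    · linarith
    · have := calc
        ρ (g₁ ζ) - ρ z ≤ C * dist z (g₁ ζ) := by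
          linarith [(abs_le.1 (hC _ hg₁ball z hzball)).1]
        _ ≤ C * (ν * (3 / 2 * (‖e₁‖ + ‖e₂‖))) := mul_le_mul_of_nonneg_left hdist hC₀
        _ = ν * (C * (3 / 2 * (‖e₁‖ + ‖e₂‖))) := by ring
        _ ≤ ν * (ε / 4) := mul_le_mul_of_nonneg_left hCε hν.le
      linarith
  rcases (hbd₁ ζ hζ).1 with ⟨hball, -, hnear⟩ | ⟨-, hfar⟩
  · rw [Set.mem_preimage, Set.mem_Ioi] at hnear
    have := mul_le_mul_of_nonneg_left ((sub_le_sub_right (hνz hball) (ν / 4)).trans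
      (norm_sub_le_smoothedDist l q z)) hε.le
    linarith
  · rw [Set.mem_preimage, Set.mem_Ioi] at hfar
    have := mul_nonneg hε.le (smoothedDist_nonneg l q (μ := ν / 4) z)
    linarith

theorem Admissible.exists_push_past_of_lt_add_smoothedDist (hg : P.Admissible D g)
    (hρ : CriticalLeviLayer ρ P.Ω a b q) {ε μ σ U : ℝ} (hε : 0 < ε) (hμ : 0 < μ) (hσ : 0 < σ)
    (hU : 0 < U) (hlU : ∀ z ∈ P.Ω, ‖l (z - q)‖ ≤ U) (ha : ε * U < ρ q - a)
    (hb : 2 * (ε * U) < b - ρ q)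
    (hne : ∀ z ∈ P.Ω, a ≤ ρ z → ρ z ≤ b → z ≠ q →
      fderiv ℝ ρ z + ε • smoothedDistDeriv l q μ z ≠ 0)
    (hbd : ∀ ζ ∈ sphere (0 : ℂ) 1, ρ q + σ < ρ (g ζ) + ε * smoothedDist l q μ (g ζ)) :
    ∃ g', P.Admissible D g' ∧ ∀ ζ ∈ sphere (0 : ℂ) 1, b < ρ (g' ζ) := by
  have hεU : 0 < ε * U := mul_pos hε hU
  have hle (z : E) (hz : z ∈ P.Ω) : ε * smoothedDist l q μ z ≤ ε * U :=
    mul_le_mul_of_nonneg_left ((smoothedDist_le l q hμ.le z).trans (hlU z hz)) hε.le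
  obtain ⟨g₁, hg₁, hbd₁⟩ := hg.exists_push_level_add_convex hρ.toLeviLayer
    (h := fun z => ε * smoothedDist l q μ z) (L := fun z => ε • smoothedDistDeriv l q μ z)
    (c₀ := ρ q + σ) (c₁ := ρ q + 2 * (ε * U))
    (continuous_const.mul (continuous_smoothedDist l q))
    ((continuous_smoothedDistDeriv l q hμ).const_smul ε)
    (fun z v => by
      have := mul_le_mul_of_nonneg_left (smoothedDist_add_le l q hμ z v) hε.le
      rwa [mul_add] at this)
    (fun z hz h₀ h₁ => by
      have haz : a ≤ ρ z := by linarith [hle z hz]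
      have hzb : ρ z ≤ b := by linarith [mul_nonneg hε.le (smoothedDist_nonneg l q (μ := μ) z)]
      refine ⟨⟨haz, hzb⟩, hne z hz haz hzb ?_⟩
      rintro rfl
      rw [smoothedDist_self l z hμ.le] at h₀
      linarith) fun ζ hζ => (hbd ζ hζ).le
  exact hg₁.exists_push_level_of_fderiv_ne_zero hρ.toLeviLayer (c₀ := ρ q + ε * U)
    (by linarith) le_rfl
    (fun z hz h₀ h₁ => hρ.fderiv_ne_zero hz (by linarith) h₁ (by rintro rfl; linarith))
    fun ζ hζ => by linarith [hbd₁ ζ hζ, hle _ (hg₁.mem_Ω ζ hζ)]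

theorem Admissible.exists_push_past_critical (hg : P.Admissible D g)
    (hρ : CriticalLeviLayer ρ P.Ω a b q) (hbdd : Bornology.IsBounded P.Ω)
    (hbd : ∀ ζ ∈ sphere (0 : ℂ) 1, a ≤ ρ (g ζ)) :
    ∃ g', P.Admissible D g' ∧ ∀ ζ ∈ sphere (0 : ℂ) 1, b < ρ (g' ζ) := by
  obtain ⟨l, e₁, e₂, h₁, h₂, c, hc, hl⟩ := hρ.exists_normal_coordinate P.isOpen_Ω
  obtain ⟨R₀, hR₀, hR₀Ω, C, hC⟩ := exists_forall_abs_sub_le_of_fderiv_eq_zero P.isOpen_Ω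
    hρ.contDiffOn hρ.mem hρ.fderiv_eq_zero
  obtain ⟨T, hT, hΩT⟩ := hbdd.subset_ball_lt 0 q
  obtain ⟨U, hU, hlU⟩ : ∃ U > 0, ∀ z ∈ P.Ω, ‖l (z - q)‖ ≤ U :=
    ⟨(‖l‖ + 1) * T, by positivity, fun z hz => (l.le_opNorm _).trans (mul_le_mul (by linarith)
      (mem_ball_iff_norm.1 (hΩT hz)).le (norm_nonneg _) (by positivity))⟩
  obtain ⟨ε, ⟨hne, hεa, hεb⟩, hε : 0 < ε⟩ :=
    (((hρ.eventually_fderiv_add_smoothedDistDeriv_ne_zero P.isOpen_Ω hc hl).and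
      ((eventually_mul_lt U (sub_pos.2 hρ.lt_apply)).and
        (eventually_mul_lt (2 * U) (sub_pos.2 hρ.apply_lt)))).and eventually_mem_nhdsWithin).exists
  obtain ⟨R, ⟨hRR₀, hRε⟩, hR : 0 < R⟩ := (((eventually_mul_lt 3 hR₀).and
    (eventually_mul_lt (3 * |C| * (3 / 2 * (‖e₁‖ + ‖e₂‖))) (show 0 < ε / 4 by positivity))).and
    eventually_mem_nhdsWithin).exists
  obtain ⟨δ, hδ, hpush⟩ := P.exists_push_near_critical D hρ hR
  obtain ⟨ν, ⟨hνa, hνδ, hνR⟩, hν : 0 < ν⟩ :=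
    (((eventually_mul_lt (ε / 8) (sub_pos.2 hρ.lt_apply)).and ((eventually_mul_lt ε hδ).and
      (eventually_mul_lt (3 / 2 * (‖e₁‖ + ‖e₂‖)) hR))).and eventually_mem_nhdsWithin).exists
  obtain ⟨g₁, hg₁, hbd₁⟩ := hpush (ε * ν / 8) (by positivity) (by linarith) g hg hbd
  have hLip (z : E) (hz : z ∈ ball q (3 * R)) (z' : E) (hz' : z' ∈ ball q (3 * R)) :
      |ρ z' - ρ z| ≤ |C| * (3 * R) * dist z' z :=
    (hC (3 * R) (by linarith) z hz z' hz').trans (by gcongr; exact le_abs_self C)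
  obtain ⟨g₂, hg₂, hbd₂⟩ := hg₁.exists_push_above_critical hρ.contDiffOn.continuousOn h₁ h₂ hε hν
    (by linarith) hR ((ball_subset_ball (by linarith)).trans hR₀Ω) hLip (by positivity)
    (by linarith) hνR hbd₁
  exact hg₂.exists_push_past_of_lt_add_smoothedDist hρ hε (by positivity)
    (show 0 < ε * ν / 8 by positivity) hU hlU hεa (by linarith) (hne _ (by positivity)) hbd₂

end DiscProblem

end CriticalLayer

section BetweenLevels

variable {E : Type*} [NormedAddCommGroup E] [NormedSpace ℂ E] [NormedSpace ℝ E]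
  [IsScalarTower ℝ ℂ E] [FiniteDimensional ℂ E]

theorem DiscProblem.Admissible.exists_push_past_of_subsingleton_critical {P : DiscProblem E} {D : E}
    {g : ℂ → E} (hg : P.Admissible D g) {ρ : E → ℝ} {a b : ℝ} (hρ : LeviLayer ρ P.Ω a b)
    (hbdd : Bornology.IsBounded P.Ω)
    (hunique : {z ∈ P.Ω | (a ≤ ρ z ∧ ρ z ≤ b) ∧ fderiv ℝ ρ z = 0}.Subsingleton)
    (hcrit : ∀ q ∈ {z ∈ P.Ω | a ≤ ρ z ∧ ρ z ≤ b}, fderiv ℝ ρ q = 0 → a < ρ q ∧ ρ q < b ∧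
      ∀ w, w ≠ 0 → ∃ w', fderiv ℝ (fderiv ℝ ρ) q w w' ≠ 0)
    (hbd : ∀ ζ ∈ sphere (0 : ℂ) 1, a ≤ ρ (g ζ)) :
    ∃ g', P.Admissible D g' ∧ ∀ ζ ∈ sphere (0 : ℂ) 1, b < ρ (g' ζ) := by
  by_cases h : ∃ q ∈ {z ∈ P.Ω | a ≤ ρ z ∧ ρ z ≤ b}, fderiv ℝ ρ q = 0
  · obtain ⟨q, hq, hq0⟩ := h
    obtain ⟨hqa, hqb, hnd⟩ := hcrit q hq hq0
    exact hg.exists_push_past_critical (q := q) ⟨hρ, hq.1, hqa, hqb, hq0, hnd,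
      fun z hz ha hb hz0 => hunique ⟨hz, ⟨ha, hb⟩, hz0⟩ ⟨hq.1, hq.2, hq0⟩⟩ hbdd hbd
  · push Not at h
    exact hg.exists_push_level_of_fderiv_ne_zero hρ le_rfl le_rfl
      (fun z hz ha hb => h z ⟨hz, ha, hb⟩) hbd

theorem push_boundary_between_levels_general {X Ω K : Set E} (hX : IsOpen X) (hΩ : IsOpen Ω)
    (hΩ_bdd : Bornology.IsBounded Ω) (hΩX : Ω ⊆ X) {ρ : E → ℝ} (hρ : ContDiffOn ℝ 2 ρ Ω) {a b : ℝ}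
    (hlevel_cpt : IsCompact {z ∈ Ω | a ≤ ρ z ∧ ρ z ≤ b})
    (hLevi : ∀ z ∈ Ω, ∃ V : Submodule ℂ E, Module.finrank ℂ V = 2 ∧ ∀ w ∈ V, w ≠ 0 →
      0 < fderiv ℝ (fderiv ℝ ρ) z w w
          + fderiv ℝ (fderiv ℝ ρ) z (Complex.I • w) (Complex.I • w))
    (hcrit_unique : ∀ q ∈ {z ∈ Ω | a ≤ ρ z ∧ ρ z ≤ b}, ∀ q' ∈ {z ∈ Ω | a ≤ ρ z ∧ ρ z ≤ b},
      fderiv ℝ ρ q = 0 → fderiv ℝ ρ q' = 0 → q = q')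
    (hcrit : ∀ q ∈ {z ∈ Ω | a ≤ ρ z ∧ ρ z ≤ b}, fderiv ℝ ρ q = 0 →
      a < ρ q ∧ ρ q < b ∧ ∀ w : E, w ≠ 0 → ∃ w' : E, fderiv ℝ (fderiv ℝ ρ) q w w' ≠ 0)
    (hK : IsClosed K) (hKΩ : K ∩ Ω = ∅) {f : ℂ → E}
    (hf_cont : ContinuousOn f (closedBall (0 : ℂ) 1))
    (hf_hol : DifferentiableOn ℂ f (ball (0 : ℂ) 1))
    (hf_mem : ∀ ζ ∈ closedBall (0 : ℂ) 1, f ζ ∈ X)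
    (hf_bd : f '' sphere (0 : ℂ) 1 ⊆ {z ∈ Ω | a < ρ z}) {r : ℝ} (hr : r < 1)
    (hfK : (f '' (closedBall (0 : ℂ) 1 \ ball (0 : ℂ) r)) ∩ K = ∅) {ε : ℝ} (hε : 0 < ε) :
    ∃ (g : ℂ → E) (lam : ℝ),
      ContinuousOn g (closedBall (0 : ℂ) 1) ∧
      DifferentiableOn ℂ g (ball (0 : ℂ) 1) ∧
      (∀ ζ ∈ closedBall (0 : ℂ) 1, g ζ ∈ X) ∧
      g '' sphere (0 : ℂ) 1 ⊆ {z ∈ Ω | b < ρ z} ∧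
      (∀ ζ ∈ closedBall (0 : ℂ) r, dist (g ζ) (f ζ) < ε) ∧
      (g '' (closedBall (0 : ℂ) 1 \ ball (0 : ℂ) r)) ∩ K = ∅ ∧
      g 0 = f 0 ∧
      r < lam ∧ lam < 1 ∧ deriv g 0 = lam • deriv f 0 := by
  have := FiniteDimensional.complete ℂ E
  let P : DiscProblem E := ⟨X, Ω, K, f, r, ε, hX, hΩ, hΩX, hK,
    Set.disjoint_iff_inter_eq_empty.2 hKΩ, hr,
    hf_cont.mono (closedBall_subset_closedBall hr.le)⟩
  have hfK' (ζ : ℂ) (hζ : ζ ∈ closedBall (0 : ℂ) 1) (hrζ : r ≤ ‖ζ‖) : f ζ ∉ K := fun hζK =>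
    Set.eq_empty_iff_forall_notMem.1 hfK _ ⟨⟨ζ, ⟨hζ, by simpa using hrζ⟩, rfl⟩, hζK⟩
  obtain ⟨lam, hrlam, hlam, hg₀, hbd₀⟩ := P.exists_admissible_dilation hε hf_cont hf_hol hf_mem
    hfK' (hρ.continuousOn.isOpen_inter_preimage hΩ isOpen_Ioi) Set.inter_subset_left
    (fun ζ hζ => hf_bd ⟨ζ, hζ, rfl⟩)
  obtain ⟨g, hg, hbd⟩ := hg₀.exists_push_past_of_subsingleton_critical ⟨hρ, hLevi, hlevel_cpt⟩
    hΩ_bdd (fun q hq q' hq' => hcrit_unique q ⟨hq.1, hq.2.1⟩ q' ⟨hq'.1, hq'.2.1⟩ hq.2.2 hq'.2.2)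
    hcrit fun ζ hζ => (hbd₀ ζ hζ).2.le
  refine ⟨g, lam, hg.continuousOn,
    fun ζ hζ => (hg.analyticOnNhd ζ (ball_subset_closedBall hζ)).differentiableWithinAt, hg.mem_X,
    ?_, hg.dist_lt, ?_, hg.apply_zero, hrlam, hlam, ?_⟩
  · exact Set.image_subset_iff.2 fun ζ hζ => ⟨hg.mem_Ω ζ hζ, hbd ζ hζ⟩
  · refine Set.eq_empty_iff_forall_notMem.2 ?_
    rintro _ ⟨⟨ζ, hζ, rfl⟩, hζK⟩
    exact hg.notMem_K ζ hζ.1 (by simpa using hζ.2) hζK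
  · rw [hg.deriv_zero, ← Complex.coe_algebraMap, algebraMap_smul]

end BetweenLevels

/-- the paper's Lemma 4.1 for domains in `ℂⁿ`, `n ≥ 3`. Pushing the
boundary of a holomorphic disc from above the level `a` to above the level `b` of a
smooth function `ρ` whose Levi form has at least 2 positive eigenvalues, assuming at
most one (interior, non-degenerate) critical point between the two levels. -/
theorem push_boundary_between_levels
    (n : ℕ) (hn : 3 ≤ n)
    (X : Set (EuclideanSpace ℂ (Fin n))) (hX : IsOpen X)
    (Ω : Set (EuclideanSpace ℂ (Fin n))) (hΩ : IsOpen Ω)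
    (hΩ_cpt : IsCompact (closure Ω)) (hΩX : closure Ω ⊆ X)
    (ρ : EuclideanSpace ℂ (Fin n) → ℝ) (hρ : ContDiffOn ℝ (⊤ : ℕ∞) ρ Ω)
    (a b : ℝ)
    (hlevel_cpt : IsCompact {z ∈ Ω | a ≤ ρ z ∧ ρ z ≤ b})
    (hLevi : ∀ z ∈ Ω, ∃ V : Submodule ℂ (EuclideanSpace ℂ (Fin n)),
      Module.finrank ℂ V = 2 ∧ ∀ w ∈ V, w ≠ 0 →
        0 < fderiv ℝ (fderiv ℝ ρ) z w w
            + fderiv ℝ (fderiv ℝ ρ) z (Complex.I • w) (Complex.I • w))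
    -- at most one critical point in `{z ∈ Ω | a ≤ ρ z ≤ b}` …
    (hcrit_unique : ∀ q ∈ {z ∈ Ω | a ≤ ρ z ∧ ρ z ≤ b},
      ∀ q' ∈ {z ∈ Ω | a ≤ ρ z ∧ ρ z ≤ b},
      fderiv ℝ ρ q = 0 → fderiv ℝ ρ q' = 0 → q = q')
    -- … and any such critical point lies strictly between the levels and is non-degenerate.
    (hcrit : ∀ q ∈ {z ∈ Ω | a ≤ ρ z ∧ ρ z ≤ b}, fderiv ℝ ρ q = 0 →
      a < ρ q ∧ ρ q < b ∧
      ∀ w : EuclideanSpace ℂ (Fin n), w ≠ 0 →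
        ∃ w' : EuclideanSpace ℂ (Fin n), fderiv ℝ (fderiv ℝ ρ) q w w' ≠ 0)
    (K : Set (EuclideanSpace ℂ (Fin n))) (hK : IsCompact K) (hKX : K ⊆ X)
    (hKΩ : K ∩ Ω = ∅)
    (f : ℂ → EuclideanSpace ℂ (Fin n))
    (hf_cont : ContinuousOn f (closedBall (0 : ℂ) 1))
    (hf_hol : DifferentiableOn ℂ f (ball (0 : ℂ) 1))
    (hf_mem : ∀ ζ ∈ closedBall (0 : ℂ) 1, f ζ ∈ X)
    (hf_bd : f '' sphere (0 : ℂ) 1 ⊆ {z ∈ Ω | a < ρ z})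
    (r : ℝ) (hr0 : 0 < r) (hr1 : r < 1)
    (hfK : (f '' (closedBall (0 : ℂ) 1 \ ball (0 : ℂ) r)) ∩ K = ∅)
    (ε : ℝ) (hε : 0 < ε) :
    ∃ (g : ℂ → EuclideanSpace ℂ (Fin n)) (lam : ℝ),
      ContinuousOn g (closedBall (0 : ℂ) 1) ∧
      DifferentiableOn ℂ g (ball (0 : ℂ) 1) ∧
      (∀ ζ ∈ closedBall (0 : ℂ) 1, g ζ ∈ X) ∧
      g '' sphere (0 : ℂ) 1 ⊆ {z ∈ Ω | b < ρ z} ∧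
      (∀ ζ ∈ closedBall (0 : ℂ) r, dist (g ζ) (f ζ) < ε) ∧
      (g '' (closedBall (0 : ℂ) 1 \ ball (0 : ℂ) r)) ∩ K = ∅ ∧
      g 0 = f 0 ∧
      r < lam ∧ lam < 1 ∧ deriv g 0 = lam • deriv f 0 :=
  push_boundary_between_levels_general hX hΩ (hΩ_cpt.isBounded.subset subset_closure)
    (subset_closure.trans hΩX) (hρ.of_le (WithTop.coe_le_coe.2 le_top)) hlevel_cpt hLevi
    hcrit_unique hcrit hK.isClosed hKΩ hf_cont hf_hol hf_mem hf_bd hr1 hfK hε
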